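/- arXiv:1806.06153 — 4 statements merged into one kernel-verified Lean document; each statement's English description precedes it below -/
import Mathlib

section
/- Let Y be a centered Gaussian random vector in ℝ^p with σ_min² ≤ E[Y(j)²] ≤ σ_max² for all j (σ_min > 0), and let μ be a median of ‖Y‖. Then for all r ≥ 0 and ε ≥ 0, P(‖Y‖ > r − ε) ≤ 20·exp(Φ₄(r+1)ε)·P(‖Y‖ > r), where Φ₄ := 1 + 56(μ + 1.5σ_max)(μ + 4.1σ_max)/(σ_max²σ_min²) + 32π(2.6σ_min + μ)²(σ_min² + 32σ_min μ + 12μ²)/σ_min⁶. -/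
open MeasureTheory ProbabilityTheory

/-!
Let `X'` be an independent copy of the centered Gaussian vector `X`. Then `cos θ • X + sin θ • X'`
is distributed like `X`. If `X` exceeds the level `R * cos θ` in some coordinate and `X'` exceeds
`R * sin θ` in the same coordinate, then the rotated vector exceeds
`R * (cos θ ^ 2 + sin θ ^ 2) = R` there. Conditioning on `X`, the second event costs a
one-dimensional Gaussian tail, which is at least `exp (-(R * sin θ) ^ 2 / σ ^ 2) / 7`. Choosing
`R = r` and `θ` with `r * cos θ = s` yields
`P(‖X‖ > s) ≤ 7 * exp ((r ^ 2 - s ^ 2) / σ ^ 2) * P(‖X‖ > r)`. For `s = r - ε` the exponent is at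
most `2 * r * ε / σ ^ 2`, and `2 / σmin ^ 2 ≤ Φ₄`.
-/

section GaussianTail

lemma sqrt_two_mul_pi_mul_exp_one_le : √(2 * Real.pi) * Real.exp 1 ≤ 7 := by
  have sqrt_le : √(2 * Real.pi) ≤ 2.51 := by
    rw [Real.sqrt_le_left (by norm_num)]
    linarith [Real.pi_lt_d4]
  calc √(2 * Real.pi) * Real.exp 1 ≤ 2.51 * 2.72 := by
        gcongr
        linarith [Real.exp_one_lt_d9]
    _ ≤ 7 := by norm_num

-- The constant `7` bounds `√(2π) e`, where the factor `e` is lost in `(a + √v)² ≤ 2 a² + 2 v`.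
lemma exp_div_le_sqrt_mul_gaussianPDFReal {m t x : ℝ} {v : NNReal} (hv : v ≠ 0)
    (hx : x ∈ Set.Ioc t (t + √v)) :
    Real.exp (-(t - m) ^ 2 / v) / 7 ≤ √v * gaussianPDFReal m v x := by
  have hv' : (0 : ℝ) < v := by positivity
  have sq_le : (x - m) ^ 2 ≤ 2 * (t - m) ^ 2 + 2 * v := by
    have : (x - t) ^ 2 ≤ v := by
      rw [← Real.sq_sqrt hv'.le]
      exact pow_le_pow_left₀ (by linarith [hx.1]) (by linarith [hx.2]) 2
    nlinarith [sq_nonneg (x - t - (t - m))]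
  have exponent_le : -(t - m) ^ 2 / v - 1 ≤ -(x - m) ^ 2 / (2 * v) := by
    rw [div_sub_one hv'.ne', div_le_div_iff₀ hv' (by positivity)]
    nlinarith
  calc Real.exp (-(t - m) ^ 2 / v) / 7
      ≤ Real.exp (-(t - m) ^ 2 / v) / (√(2 * Real.pi) * Real.exp 1) := by
        gcongr
        exact sqrt_two_mul_pi_mul_exp_one_le
    _ = (√(2 * Real.pi))⁻¹ * Real.exp (-(t - m) ^ 2 / v - 1) := by
        rw [Real.exp_sub]
        field_simp
    _ ≤ (√(2 * Real.pi))⁻¹ * Real.exp (-(x - m) ^ 2 / (2 * v)) := by gcongr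
    _ = √v * gaussianPDFReal m v x := by
        rw [gaussianPDFReal_def, Real.sqrt_mul (by positivity : 0 ≤ 2 * Real.pi)]
        field_simp

lemma exp_div_le_gaussianReal_real_Ioi (m t : ℝ) {v : NNReal} (hv : v ≠ 0) :
    Real.exp (-(t - m) ^ 2 / v) / 7 ≤ (gaussianReal m v).real (Set.Ioi t) := by
  have sqrt_pos : 0 < √(v : ℝ) := by positivity
  calc Real.exp (-(t - m) ^ 2 / v) / 7
      = Real.exp (-(t - m) ^ 2 / v) / 7 / √v * volume.real (Set.Ioc t (t + √v)) := by
        rw [Real.volume_real_Ioc_of_le (by linarith), add_sub_cancel_left,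
          div_mul_cancel₀ _ sqrt_pos.ne']
    _ ≤ ∫ x in Set.Ioc t (t + √v), gaussianPDFReal m v x := by
        refine setIntegral_ge_of_const_le_real measurableSet_Ioc (by simp) (fun x hx ↦ ?_)
          (integrable_gaussianPDFReal m v).integrableOn
        rw [div_le_iff₀' sqrt_pos]
        exact exp_div_le_sqrt_mul_gaussianPDFReal hv hx
    _ = (gaussianReal m v).real (Set.Ioc t (t + √v)) := by
        rw [measureReal_def, gaussianReal_apply_eq_integral m hv,
          ENNReal.toReal_ofReal (integral_nonneg fun x ↦ gaussianPDFReal_nonneg m v x)]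
    _ ≤ (gaussianReal m v).real (Set.Ioi t) := measureReal_mono Set.Ioc_subset_Ioi_self

end GaussianTail

section PointwiseSupremum

variable {ι : Type*}

lemma lt_iff_exists_lt_of_isLUB_range {α : Type*} [LinearOrder α] {f : ι → α} {a : α}
    (ha : IsLUB (Set.range f) a) (b : α) : b < a ↔ ∃ i, b < f i := by
  simp [lt_isLUB_iff ha]

lemma isOpen_setOf_lt_of_isLUB_range {X : Type*} [TopologicalSpace X] {f : ι → X → ℝ} {M : X → ℝ}
    (hf : ∀ i, Continuous (f i)) (hM : ∀ x, IsLUB (Set.range fun i ↦ f i x) (M x)) (s : ℝ) :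
    IsOpen {x | s < M x} := by
  simp only [fun x ↦ lt_iff_exists_lt_of_isLUB_range (hM x) s, Set.ofPred_exists]
  exact isOpen_iUnion fun i ↦ isOpen_lt continuous_const (hf i)

end PointwiseSupremum

lemma lt_cos_mul_add_sin_mul {R θ a b : ℝ} (hθ : θ ∈ Set.Icc 0 (Real.pi / 2))
    (ha : R * Real.cos θ < a) (hb : R * Real.sin θ < b) :
    R < Real.cos θ * a + Real.sin θ * b := by
  have hcos : 0 ≤ Real.cos θ := Real.cos_nonneg_of_mem_Icc ⟨by linarith [hθ.1, hθ.2], hθ.2⟩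
  have hsin : 0 ≤ Real.sin θ := Real.sin_nonneg_of_mem_Icc ⟨hθ.1, by linarith [hθ.1, hθ.2]⟩
  have hR : R = Real.cos θ * (R * Real.cos θ) + Real.sin θ * (R * Real.sin θ) := by
    linear_combination -R * Real.cos_sq_add_sin_sq θ
  rw [hR]
  rcases hcos.eq_or_lt with hcos_zero | hcos_pos
  · have hsin_pos : 0 < Real.sin θ := hsin.lt_of_ne' fun hsin_zero ↦ by
      simpa [← hcos_zero, hsin_zero] using Real.cos_sq_add_sin_sq θ
    exact add_lt_add_of_le_of_lt (by gcongr) (by gcongr)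
  · exact add_lt_add_of_lt_of_le (by gcongr) (by gcongr)

section GaussianSupremum

variable {E : Type*} [NormedAddCommGroup E] [NormedSpace ℝ E] [MeasurableSpace E] [BorelSpace E]
  [CompleteSpace E] [SecondCountableTopology E] {ν : Measure E} [IsGaussian ν]

lemma exp_div_le_measureReal_lt_strongDual (hmean : ν[id] = 0) {σ : ℝ} (hσ : 0 < σ)
    {L : StrongDual ℝ E} (hvar : σ ^ 2 ≤ Var[L; ν]) (t : ℝ) :
    Real.exp (-t ^ 2 / σ ^ 2) / 7 ≤ ν.real {x | t < L x} := by
  have var_pos : 0 < Var[L; ν] := (by positivity : 0 < σ ^ 2).trans_le hvar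
  have law : ν.map L = gaussianReal 0 Var[L; ν].toNNReal := by
    rw [IsGaussian.map_eq_gaussianReal, IsGaussian.integral_dual, ← map_zero L, ← hmean]
    rfl
  calc Real.exp (-t ^ 2 / σ ^ 2) / 7 ≤ Real.exp (-t ^ 2 / Var[L; ν]) / 7 := by
        simp only [neg_div]
        gcongr
    _ ≤ (ν.map L).real (Set.Ioi t) := by
        rw [law]
        simpa [var_pos.le] using
          exp_div_le_gaussianReal_real_Ioi 0 t (Real.toNNReal_pos.2 var_pos).ne'
    _ = ν.real {x | t < L x} := map_measureReal_apply (by fun_prop) measurableSet_Ioi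

lemma prod_setOf_rotation_mem (hmean : ν[id] = 0) (θ : ℝ) {A : Set E} (hA : MeasurableSet A) :
    (ν.prod ν) {z | Real.cos θ • z.1 + Real.sin θ • z.2 ∈ A} = ν A := by
  calc (ν.prod ν) {z | Real.cos θ • z.1 + Real.sin θ • z.2 ∈ A}
      = (ν.prod ν).map (ContinuousLinearMap.rotation θ) (Prod.fst ⁻¹' A) :=
        (Measure.map_apply (ContinuousLinearMap.rotation θ).continuous.measurable
          (measurable_fst hA)).symm
    _ = ν A := by
        rw [IsGaussian.map_rotation_eq_self hmean, ← Set.prod_univ, Measure.prod_prod,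
          measure_univ, mul_one]

variable {ι : Type*} {L : ι → StrongDual ℝ E} {M : E → ℝ}
  (hM : ∀ x, IsLUB (Set.range fun i ↦ L i x) (M x))

include hM

lemma mul_measure_lt_isLUB_range_le (hmean : ν[id] = 0) {R θ : ℝ}
    (hθ : θ ∈ Set.Icc 0 (Real.pi / 2)) {c : ENNReal}
    (hc : ∀ i, c ≤ ν {x | R * Real.sin θ < L i x}) :
    c * ν {x | R * Real.cos θ < M x} ≤ ν {x | R < M x} := by
  have hmeas : MeasurableSet {x | R < M x} :=
    (isOpen_setOf_lt_of_isLUB_range (fun i ↦ (L i).continuous) hM R).measurableSet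
  set A : Set (E × E) := {z | Real.cos θ • z.1 + Real.sin θ • z.2 ∈ {x | R < M x}}
  have hA : MeasurableSet A := hmeas.preimage (by fun_prop)
  have slice_ge : {x | R * Real.cos θ < M x} ⊆ {x | c ≤ ν (Prod.mk x ⁻¹' A)} := by
    intro x hx
    obtain ⟨i, hi⟩ := (lt_iff_exists_lt_of_isLUB_range (hM x) _).1 hx
    refine (hc i).trans (measure_mono fun y hy ↦ ?_)
    refine (lt_iff_exists_lt_of_isLUB_range (hM _) R).2 ⟨i, ?_⟩
    simpa using lt_cos_mul_add_sin_mul hθ hi hy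
  calc c * ν {x | R * Real.cos θ < M x} ≤ c * ν {x | c ≤ ν (Prod.mk x ⁻¹' A)} := by gcongr
    _ ≤ ∫⁻ x, ν (Prod.mk x ⁻¹' A) ∂ν :=
        mul_meas_ge_le_lintegral (measurable_measure_prodMk_left hA) c
    _ = (ν.prod ν) A := (Measure.prod_apply hA).symm
    _ = ν {x | R < M x} := prod_setOf_rotation_mem hmean θ hmeas

variable (hmean : ν[id] = 0) {σ : ℝ} (hσ : 0 < σ) (hvar : ∀ i, σ ^ 2 ≤ Var[L i; ν])

include hmean hσ hvar

lemma measureReal_lt_isLUB_range_le_exp_sq_sub_sq {r s : ℝ} (hs : 0 ≤ s) (hsr : s ≤ r) :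
    ν.real {x | s < M x} ≤ 7 * Real.exp ((r ^ 2 - s ^ 2) / σ ^ 2) * ν.real {x | r < M x} := by
  set θ := Real.arccos (s / r)
  have hr : 0 ≤ r := hs.trans hsr
  have hθ : θ ∈ Set.Icc 0 (Real.pi / 2) :=
    ⟨Real.arccos_nonneg _, Real.arccos_le_pi_div_two.2 (by positivity)⟩
  have hcos : r * Real.cos θ = s := by
    rw [Real.cos_arccos (by linarith [div_nonneg hs hr]) (div_le_one_of_le₀ hsr hr)]
    exact mul_div_cancel_of_imp' fun h ↦ by linarith
  have hsin : (r * Real.sin θ) ^ 2 = r ^ 2 - s ^ 2 := by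
    rw [mul_pow, Real.sin_sq, ← hcos]
    ring
  set q := Real.exp (-(r ^ 2 - s ^ 2) / σ ^ 2) / 7 with hq
  have htail (i : ι) : ENNReal.ofReal q ≤ ν {x | r * Real.sin θ < L i x} := by
    rw [ENNReal.ofReal_le_iff_le_toReal (measure_ne_top _ _), hq, ← hsin]
    exact exp_div_le_measureReal_lt_strongDual hmean hσ (hvar i) _
  have hrot : q * ν.real {x | s < M x} ≤ ν.real {x | r < M x} := by
    have h := ENNReal.toReal_mono (measure_ne_top _ _)
      (mul_measure_lt_isLUB_range_le hM hmean hθ htail)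
    rwa [ENNReal.toReal_mul, ENNReal.toReal_ofReal (by positivity), hcos] at h
  rw [hq, neg_div, Real.exp_neg] at hrot
  field_simp at hrot ⊢
  linarith

lemma one_le_exp_sq_mul_measureReal_lt_isLUB_range (r : ℝ) :
    1 ≤ 7 * Real.exp (r ^ 2 / σ ^ 2) * ν.real {x | r < M x} := by
  obtain ⟨i⟩ : Nonempty ι := Set.range_nonempty_iff_nonempty.1 (hM 0).nonempty
  have htail : Real.exp (-r ^ 2 / σ ^ 2) / 7 ≤ ν.real {x | r < M x} :=
    (exp_div_le_measureReal_lt_strongDual hmean hσ (hvar i) r).trans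
      (measureReal_mono fun x hx ↦ (lt_iff_exists_lt_of_isLUB_range (hM x) r).2 ⟨i, hx⟩)
  rw [neg_div, Real.exp_neg] at htail
  field_simp at htail ⊢
  linarith

theorem measureReal_sub_lt_isLUB_range_le {r ε : ℝ} (hr : 0 ≤ r) (hε : 0 ≤ ε) :
    ν.real {x | r - ε < M x} ≤ 7 * Real.exp (2 * r * ε / σ ^ 2) * ν.real {x | r < M x} := by
  rcases le_total ε r with hεr | hrε
  · refine (measureReal_lt_isLUB_range_le_exp_sq_sub_sq hM hmean hσ hvar
      (sub_nonneg.2 hεr) (sub_le_self r hε)).trans ?_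
    gcongr
    nlinarith [sq_nonneg ε]
  · refine (measureReal_le_one.trans
      (one_le_exp_sq_mul_measureReal_lt_isLUB_range hM hmean hσ hvar r)).trans ?_
    gcongr
    nlinarith

end GaussianSupremum

section CenteredMarginals

variable {E : Type*} [NormedAddCommGroup E] [NormedSpace ℝ E] [MeasurableSpace E] [BorelSpace E]
  [CompleteSpace E] [SecondCountableTopology E]

lemma integral_id_eq_zero_of_map_strongDual_eq_gaussianReal {ν : Measure E}
    (h : ∀ L : StrongDual ℝ E, ∃ v : NNReal, ν.map L = gaussianReal 0 v) : ν[id] = 0 := by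
  have : IsGaussian ν := isGaussian_of_map_eq_gaussianReal fun L ↦ ⟨0, h L⟩
  refine SeparatingDual.eq_zero_of_forall_dual_eq_zero (R := ℝ) fun L ↦ ?_
  obtain ⟨v, hv⟩ := h L
  calc L ν[id] = ν[L] := (IsGaussian.integral_dual L).symm
    _ = ∫ y, y ∂(ν.map L) := (integral_map L.continuous.aemeasurable aestronglyMeasurable_id).symm
    _ = 0 := by rw [hv, integral_id_gaussianReal]

lemma variance_strongDual_map_eq_integral_sq {Ω : Type*} [MeasurableSpace Ω] {P : Measure Ω}
    {X : Ω → E} (hX : HasGaussianLaw X P) (hmean : P[X] = 0) (L : StrongDual ℝ E) :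
    Var[L; P.map X] = ∫ ω, L (X ω) ^ 2 ∂P := by
  rw [variance_map (by fun_prop) hX.aemeasurable, variance_of_integral_eq_zero]
  · rfl
  · exact L.continuous.measurable.comp_aemeasurable hX.aemeasurable
  · simpa [hmean] using L.integral_comp_comm hX.integrable

variable {Ω ι : Type*} [MeasurableSpace Ω] {P : Measure Ω} [Fintype ι] {Y : Ω → ι → ℝ}

lemma aemeasurable_of_map_sum_eq_gaussianReal
    (h : ∀ t : ι → ℝ, ∃ v : NNReal, P.map (fun ω ↦ ∑ j, t j * Y ω j) = gaussianReal 0 v) :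
    AEMeasurable Y P := by
  classical
  refine aemeasurable_pi_iff.2 fun j ↦ aemeasurable_of_map_neZero ?_
  obtain ⟨v, hv⟩ := h (Pi.single j 1)
  simp only [Pi.single_apply, ite_mul, one_mul, zero_mul, Finset.sum_ite_eq', Finset.mem_univ,
    if_true] at hv
  rw [hv]
  infer_instance

lemma exists_map_map_strongDual_eq_gaussianReal
    (h : ∀ t : ι → ℝ, ∃ v : NNReal, P.map (fun ω ↦ ∑ j, t j * Y ω j) = gaussianReal 0 v)
    (L : StrongDual ℝ (ι → ℝ)) : ∃ v : NNReal, (P.map Y).map L = gaussianReal 0 v := by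
  classical
  obtain ⟨v, hv⟩ := h fun j ↦ L fun i ↦ if j = i then 1 else 0
  refine ⟨v, ?_⟩
  rw [AEMeasurable.map_map_of_aemeasurable (by fun_prop)
    (aemeasurable_of_map_sum_eq_gaussianReal h), ← hv]
  congr 1
  ext ω
  simpa [mul_comm] using LinearMap.pi_apply_eq_sum_univ (L : (ι → ℝ) →ₗ[ℝ] ℝ) (Y ω)

end CenteredMarginals

section SupNorm

variable {ι : Type*} [Fintype ι]

/-- The signed coordinate functionals `± x j`, whose supremum is the `ℓ∞` norm: `inl j` stands for
`+` and `inr j` for `-`. -/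
def signedProj : ι ⊕ ι → StrongDual ℝ (ι → ℝ) :=
  Sum.elim ContinuousLinearMap.proj fun j ↦ -ContinuousLinearMap.proj j

lemma isLUB_range_signedProj_norm [Nonempty ι] (x : ι → ℝ) :
    IsLUB (Set.range fun k ↦ signedProj k x) ‖x‖ := by
  refine isLUB_iff_le_iff.2 fun b ↦ ?_
  simp [signedProj, pi_norm_le_iff_of_nonempty, upperBounds, abs_le', forall_and, or_imp]

end SupNorm

section RandomVector

variable {Ω ι : Type*} [MeasurableSpace Ω] {P : Measure Ω} [Fintype ι] [Nonempty ι] {Y : Ω → ι → ℝ}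

theorem measureReal_sub_lt_norm_le_of_hasGaussianLaw (hY : HasGaussianLaw Y P) (hmean : P[Y] = 0)
    {σ : ℝ} (hσ : 0 < σ) (hlow : ∀ j, σ ^ 2 ≤ ∫ ω, Y ω j ^ 2 ∂P) {r ε : ℝ} (hr : 0 ≤ r)
    (hε : 0 ≤ ε) :
    P.real {ω | r - ε < ‖Y ω‖} ≤
      7 * Real.exp (2 * r * ε / σ ^ 2) * P.real {ω | r < ‖Y ω‖} := by
  have : IsGaussian (P.map Y) := hY.isGaussian_map
  have hmean_map : (P.map Y)[id] = 0 := by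
    rwa [integral_map hY.aemeasurable (by fun_prop)]
  have hvar (k : ι ⊕ ι) : σ ^ 2 ≤ Var[signedProj k; P.map Y] := by
    rw [variance_strongDual_map_eq_integral_sq hY hmean]
    cases k <;> simpa [signedProj] using hlow _
  have htail (s : ℝ) : (P.map Y).real {x | s < ‖x‖} = P.real {ω | s < ‖Y ω‖} :=
    map_measureReal_apply_of_aemeasurable hY.aemeasurable
      (measurableSet_lt measurable_const measurable_norm)
  simpa only [htail] using
    measureReal_sub_lt_isLUB_range_le isLUB_range_signedProj_norm hmean_map hσ hvar hr hε

theorem gaussian_sup_tail_ratio_bound_general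
    (hGauss : ∀ t : ι → ℝ, ∃ v : NNReal, P.map (fun ω ↦ ∑ j, t j * Y ω j) = gaussianReal 0 v)
    {σ : ℝ} (hσ : 0 < σ) (hlow : ∀ j, σ ^ 2 ≤ ∫ ω, Y ω j ^ 2 ∂P) {r ε : ℝ} (hr : 0 ≤ r)
    (hε : 0 ≤ ε) :
    P.real {ω | r - ε < ‖Y ω‖} ≤
      7 * Real.exp (2 * r * ε / σ ^ 2) * P.real {ω | r < ‖Y ω‖} := by
  have hmarginals := exists_map_map_strongDual_eq_gaussianReal hGauss
  refine measureReal_sub_lt_norm_le_of_hasGaussianLaw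
    ⟨isGaussian_of_map_eq_gaussianReal fun L ↦ ⟨0, hmarginals L⟩⟩ ?_ hσ hlow hr hε
  rw [← integral_id_eq_zero_of_map_strongDual_eq_gaussianReal hmarginals,
    integral_map (aemeasurable_of_map_sum_eq_gaussianReal hGauss) (by fun_prop)]
  rfl

end RandomVector

section Constant

lemma neg_div_sq_le_div_sq_mul_sq {σmin σmax : ℝ} (μ : ℝ) (hσmin : σmin ≠ 0) (hσmax : σmax ≠ 0) :
    -(95 / σmin ^ 2) ≤ 56 * (μ + 1.5 * σmax) * (μ + 4.1 * σmax) / (σmax ^ 2 * σmin ^ 2) := by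
  -- As a function of `μ` the right-hand side is minimal at `-2.8 σmax`, with value `-94.64 σmax²`.
  have hnum : -95 * σmax ^ 2 ≤ 56 * (μ + 1.5 * σmax) * (μ + 4.1 * σmax) := by
    nlinarith [sq_nonneg (μ + 2.8 * σmax)]
  calc -(95 / σmin ^ 2) = -95 * σmax ^ 2 / (σmax ^ 2 * σmin ^ 2) := by field_simp
    _ ≤ _ := by gcongr

lemma div_sq_le_pi_mul_div_pow_six {σmin μ : ℝ} (hσmin : 0 < σmin) (hμ : 0 ≤ μ) :
    600 / σmin ^ 2 ≤ 32 * Real.pi * (2.6 * σmin + μ) ^ 2 *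
      (σmin ^ 2 + 32 * σmin * μ + 12 * μ ^ 2) / σmin ^ 6 := by
  calc 600 / σmin ^ 2 = 32 * 3 * (2.5 * σmin + 0) ^ 2 * (σmin ^ 2 + 0 + 0) / σmin ^ 6 := by
        field_simp
        ring
    _ ≤ _ := by
        gcongr
        · exact Real.pi_gt_three.le
        · norm_num
        · positivity
        · positivity

lemma two_div_sq_le_tail_constant {σmin σmax μ : ℝ} (hσmin : 0 < σmin) (hσmax : σmax ≠ 0)
    (hμ : 0 ≤ μ) :
    2 / σmin ^ 2 ≤ 1 + 56 * (μ + 1.5 * σmax) * (μ + 4.1 * σmax) / (σmax ^ 2 * σmin ^ 2)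
      + 32 * Real.pi * (2.6 * σmin + μ) ^ 2 * (σmin ^ 2 + 32 * σmin * μ + 12 * μ ^ 2)
        / σmin ^ 6 := by
  have hpos : 0 < 1 / σmin ^ 2 := by positivity
  have hmax := neg_div_sq_le_div_sq_mul_sq μ hσmin.ne' hσmax
  have hmin := div_sq_le_pi_mul_div_pow_six hσmin hμ
  rw [div_eq_mul_one_div] at hmax hmin ⊢
  linarith

lemma mul_exp_le_mul_exp_of_two_div_sq_le {σ Φ r ε : ℝ} (hΦ : 2 / σ ^ 2 ≤ Φ) (hr : 0 ≤ r)
    (hε : 0 ≤ ε) :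
    7 * Real.exp (2 * r * ε / σ ^ 2) ≤ 20 * Real.exp (Φ * (r + 1) * ε) := by
  have hΦ_nonneg : 0 ≤ Φ := le_trans (by positivity) hΦ
  have hexponent : 2 * r * ε / σ ^ 2 ≤ Φ * (r + 1) * ε := by
    calc 2 * r * ε / σ ^ 2 = 2 / σ ^ 2 * r * ε := by ring
      _ ≤ Φ * (r + 1) * ε := by
          gcongr
          linarith
  gcongr
  norm_num

end Constant

lemma nonneg_of_measure_norm_le_ne_zero {Ω E : Type*} [MeasurableSpace Ω] [SeminormedAddGroup E]
    {P : Measure Ω} {Y : Ω → E} {μ : ℝ} (h : P {ω | ‖Y ω‖ ≤ μ} ≠ 0) : 0 ≤ μ := by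
  obtain ⟨ω, hω⟩ := nonempty_of_measure_ne_zero h
  exact (norm_nonneg _).trans hω

/-- **Theorem 2.1(2)** (Gaussian tail-ratio bound): if `Y` is a centered Gaussian random
vector in `ℝ^p` (with the `ℓ∞` norm) whose coordinate variances lie between `σmin ^ 2` and
`σmax ^ 2` with `σmin > 0`, and `μ` is a median of `‖Y‖`, then for all `r ≥ 0` and `ε ≥ 0`,
`P(‖Y‖ > r - ε) ≤ 20 * exp (Φ₄ (r+1) ε) * P(‖Y‖ > r)` with the explicit constant `Φ₄`. -/
theorem gaussian_sup_tail_ratio_bound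
    {Ω : Type*} [MeasurableSpace Ω] (P : Measure Ω) [IsProbabilityMeasure P]
    {p : ℕ} (hp : 0 < p) (Y : Ω → Fin p → ℝ) (hYmeas : Measurable Y)
    (hGauss : ∀ t : Fin p → ℝ, ∃ v : NNReal,
      P.map (fun ω => ∑ j, t j * Y ω j) = gaussianReal 0 v)
    (σmin σmax : ℝ) (hσmin : 0 < σmin)
    (hlow : ∀ j, σmin ^ 2 ≤ ∫ ω, (Y ω j) ^ 2 ∂P)
    (hup : ∀ j, ∫ ω, (Y ω j) ^ 2 ∂P ≤ σmax ^ 2)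
    (μ : ℝ)
    (hmed₁ : (1 : ℝ) / 2 ≤ (P {ω | ‖Y ω‖ ≤ μ}).toReal)
    (hmed₂ : (1 : ℝ) / 2 ≤ (P {ω | μ ≤ ‖Y ω‖}).toReal)
    (Φ₄ : ℝ)
    (hΦ₄ : Φ₄ = 1 + 56 * (μ + 1.5 * σmax) * (μ + 4.1 * σmax) / (σmax ^ 2 * σmin ^ 2)
        + 32 * Real.pi * (2.6 * σmin + μ) ^ 2 * (σmin ^ 2 + 32 * σmin * μ + 12 * μ ^ 2)
          / σmin ^ 6) :
    ∀ r : ℝ, 0 ≤ r → ∀ ε : ℝ, 0 ≤ ε →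
      (P {ω | r - ε < ‖Y ω‖}).toReal ≤
        20 * Real.exp (Φ₄ * (r + 1) * ε) * (P {ω | r < ‖Y ω‖}).toReal := by
  intro r hr ε hε
  have hnonempty : Nonempty (Fin p) := ⟨⟨0, hp⟩⟩
  have hμ : 0 ≤ μ := nonneg_of_measure_norm_le_ne_zero (P := P) (Y := Y) fun h ↦ by
    norm_num [h] at hmed₁
  have hσmax : σmax ≠ 0 := by
    rintro rfl
    nlinarith [(hlow ⟨0, hp⟩).trans (hup ⟨0, hp⟩)]
  have hconstant := two_div_sq_le_tail_constant hσmin hσmax hμ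
  rw [← hΦ₄] at hconstant
  exact (gaussian_sup_tail_ratio_bound_general hGauss hσmin hlow hr hε).trans
    (mul_le_mul_of_nonneg_right (mul_exp_le_mul_exp_of_two_div_sq_le hconstant hr hε)
      measureReal_nonneg)
end

section
/- Let Z be a centered Gaussian random vector in ℝ^p with E[Z(j)²] ≥ σ² > 0 for every 1 ≤ j ≤ p. Then for every 0 < ε ≤ σ/2 and every λ > 0, P(λ − ε ≤ max_{1≤j≤p}|Z(j)| ≤ λ + ε) ≤ 2ε·K(λ), where K(λ) := 2σ^{-1}(2.6 + λ/σ). -/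
open MeasureTheory ProbabilityTheory
open scoped ENNReal NNReal

/-!
Let `X` be a Gaussian vector whose coordinates have the same variance `v` and nonnegative means, and
split the probability space according to which coordinate attains the maximum. Given the residuals
`X k - (cov(X k, X j) / v) X j`, which are independent of `X j`, the event that `X j` is the maximum
is an upper set in the value of `X j`, because `cov(X k, X j) ≤ v`. Hence the law of the maximum has
an increasing density with respect to the centered Gaussian measure `γ` of variance `v`.

For such a law `ρ`, the ratio `ρ [a, b] / γ [a, b]` is at most the ratio on `(b, ∞)`, which gives
`ρ [a, b] * γ [a, ∞) ≤ γ [a, b]`. When `v = 1`, the Mills-type bound `φ a ≤ (a + 1) γ [a, ∞)` on the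
Gaussian density `φ` then yields `ρ [a, b] ≤ (b - a) (a + 1)` for `0 ≤ a ≤ b`. Unequal variances are
normalized by an affine change of each coordinate, and the maximum of `|Z j|` is the maximum of the
Gaussian family consisting of the `Z j` and the `-Z j`.
-/

section MonotoneDensity

variable {α β : Type*} [MeasurableSpace α] [MeasurableSpace β]

lemma map_fst_restrict_prod (μ : Measure α) (ν : Measure β) [SFinite μ] [SFinite ν]
    {B : Set (α × β)} (hB : MeasurableSet B) :
    ((μ.prod ν).restrict B).map Prod.fst = μ.withDensity fun x => ν (Prod.mk x ⁻¹' B) := by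
  ext s hs
  rw [Measure.map_apply measurable_fst hs, Measure.restrict_apply (measurable_fst hs),
    withDensity_apply _ hs, Set.inter_comm, ← Set.prod_univ, ← Measure.restrict_apply hB,
    ← Measure.restrict_prod_eq_prod_univ, Measure.prod_apply hB]

variable [LinearOrder α] [TopologicalSpace α] [OrderClosedTopology α] [OpensMeasurableSpace α]
  {μ : Measure α} {h : α → ℝ≥0∞}

lemma withDensity_Icc_mul_Ioi_le_of_monotone (hh : Monotone h) (a b : α) :
    μ.withDensity h (Set.Icc a b) * μ (Set.Ioi b) ≤
      μ (Set.Icc a b) * μ.withDensity h (Set.Ioi b) := by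
  rw [withDensity_apply _ measurableSet_Icc, withDensity_apply _ measurableSet_Ioi]
  have h_le : ∫⁻ x in Set.Icc a b, h x ∂μ ≤ h b * μ (Set.Icc a b) := by
    rw [← setLIntegral_const]
    exact setLIntegral_mono' measurableSet_Icc fun x hx => hh hx.2
  have le_h : h b * μ (Set.Ioi b) ≤ ∫⁻ x in Set.Ioi b, h x ∂μ := by
    rw [← setLIntegral_const]
    exact setLIntegral_mono' measurableSet_Ioi fun x hx => hh (le_of_lt hx)
  calc (∫⁻ x in Set.Icc a b, h x ∂μ) * μ (Set.Ioi b)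
      ≤ h b * μ (Set.Icc a b) * μ (Set.Ioi b) := by gcongr
    _ = μ (Set.Icc a b) * (h b * μ (Set.Ioi b)) := by ring
    _ ≤ μ (Set.Icc a b) * ∫⁻ x in Set.Ioi b, h x ∂μ := by gcongr

lemma withDensity_Icc_mul_Ici_le_of_monotone (hh : Monotone h)
    [IsProbabilityMeasure (μ.withDensity h)] (a b : α) :
    μ.withDensity h (Set.Icc a b) * μ (Set.Ici a) ≤ μ (Set.Icc a b) := by
  set ρ := μ.withDensity h
  have Ici_subset : Set.Ici a ⊆ Set.Icc a b ∪ Set.Ioi b := fun x hx =>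
    (le_or_gt x b).imp (fun hxb => ⟨hx, hxb⟩) id
  have disj : Disjoint (Set.Icc a b) (Set.Ioi b) :=
    Set.disjoint_left.2 fun _ hx => not_lt.2 hx.2
  calc ρ (Set.Icc a b) * μ (Set.Ici a)
      ≤ ρ (Set.Icc a b) * (μ (Set.Icc a b) + μ (Set.Ioi b)) := by
        gcongr
        exact (measure_mono Ici_subset).trans (measure_union_le _ _)
    _ = μ (Set.Icc a b) * ρ (Set.Icc a b) + ρ (Set.Icc a b) * μ (Set.Ioi b) := by ring
    _ ≤ μ (Set.Icc a b) * ρ (Set.Icc a b) + μ (Set.Icc a b) * ρ (Set.Ioi b) := by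
        exact add_le_add_right (withDensity_Icc_mul_Ioi_le_of_monotone hh a b) _
    _ = μ (Set.Icc a b) * ρ (Set.Icc a b ∪ Set.Ioi b) := by
        rw [measure_union disj measurableSet_Ioi, mul_add]
    _ ≤ μ (Set.Icc a b) := mul_le_of_le_one_right' prob_le_one

end MonotoneDensity

section Gaussian

lemma gaussianReal_eq_withDensity_exp (m : ℝ) {v : ℝ≥0} (hv : v ≠ 0) :
    gaussianReal m v = (gaussianReal 0 v).withDensity
      fun x => ENNReal.ofReal (Real.exp ((m * x - m ^ 2 / 2) / v)) := by
  rw [gaussianReal_of_var_ne_zero _ hv, gaussianReal_of_var_ne_zero _ hv,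
    ← withDensity_mul _ (measurable_gaussianPDF _ _) (by fun_prop)]
  congr 1
  ext x
  simp only [gaussianPDF, Pi.mul_apply, gaussianPDFReal]
  rw [← ENNReal.ofReal_mul (by positivity), mul_assoc _ (Real.exp _), ← Real.exp_add]
  congr 3
  field_simp
  ring

lemma hasDerivAt_gaussianPDFReal (m : ℝ) (v : ℝ≥0) (x : ℝ) :
    HasDerivAt (gaussianPDFReal m v) (-((x - m) / v) * gaussianPDFReal m v x) x := by
  have key := ((((hasDerivAt_id x).sub_const m).pow 2).neg.div_const (2 * (v : ℝ))).exp.const_mul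
    (√(2 * Real.pi * v))⁻¹
  simp only [gaussianPDFReal_def]
  convert! key using 1
  by_cases hv : v = 0
  · simp [hv]
  · simp only [id_eq, Pi.neg_apply, Pi.pow_apply]
    field_simp
    ring

lemma antitoneOn_gaussianPDFReal (m : ℝ) (v : ℝ≥0) :
    AntitoneOn (gaussianPDFReal m v) (Set.Ici m) := by
  intro x hx y _ hxy
  have : 0 ≤ x - m := sub_nonneg.2 hx
  simp only [gaussianPDFReal]
  gcongr

lemma tendsto_gaussianPDFReal_atTop (m : ℝ) (v : ℝ≥0) :
    Filter.Tendsto (gaussianPDFReal m v) Filter.atTop (nhds 0) := by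
  rcases eq_or_ne v 0 with rfl | hv
  · simp [gaussianPDFReal_zero_var, Pi.zero_def]
  have sq_lim : Filter.Tendsto (fun x => (x - m) ^ 2 / (2 * v)) Filter.atTop Filter.atTop :=
    ((Filter.tendsto_pow_atTop two_ne_zero).comp
      (Filter.tendsto_atTop_add_const_right _ (-m) Filter.tendsto_id)).atTop_div_const
        (by positivity)
  simpa [gaussianPDFReal_def, neg_div] using
    (Real.tendsto_exp_neg_atTop_nhds_zero.comp sq_lim).const_mul (√(2 * Real.pi * v))⁻¹

lemma real_gaussianReal_eq_setIntegral (m : ℝ) {v : ℝ≥0} (hv : v ≠ 0) (s : Set ℝ) :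
    (gaussianReal m v).real s = ∫ x in s, gaussianPDFReal m v x := by
  rw [measureReal_def, gaussianReal_apply_eq_integral _ hv,
    ENNReal.toReal_ofReal (integral_nonneg fun _ => gaussianPDFReal_nonneg _ _ _)]

lemma gaussianPDFReal_le_mul_real_gaussianReal_Ici {a : ℝ} (ha : 0 ≤ a) :
    gaussianPDFReal 0 1 a ≤ (a + 1) * (gaussianReal 0 1).real (Set.Ici a) := by
  set φ := gaussianPDFReal 0 1
  -- `g ≤ φ` has the explicit antiderivative `-φ x / (x + 1)`.
  set g : ℝ → ℝ := fun x => φ x * ((x ^ 2 + x + 1) / (x + 1) ^ 2)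
  have deriv_eq : ∀ x ∈ Set.Ici a, HasDerivAt (fun x => -(φ x / (x + 1))) (g x) x := by
    intro x hx
    have hx₀ : x + 1 ≠ 0 := by linarith [Set.mem_Ici.1 hx]
    convert! ((hasDerivAt_gaussianPDFReal 0 1 x).div ((hasDerivAt_id x).add_const 1) hx₀).neg
      using 1
    simp only [g, φ, id_eq, NNReal.coe_one]
    field_simp
    ring
  have lim : Filter.Tendsto (fun x => -(φ x / (x + 1))) Filter.atTop (nhds 0) := by
    simpa using ((tendsto_gaussianPDFReal_atTop 0 1).div_atTop
      (Filter.tendsto_atTop_add_const_right _ (1 : ℝ) Filter.tendsto_id)).neg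
  have g_nonneg : ∀ x ∈ Set.Ioi a, 0 ≤ g x := fun x hx => by
    have : 0 < x := ha.trans_lt hx
    exact mul_nonneg (gaussianPDFReal_nonneg _ _ _) (by positivity)
  have g_le : ∀ x ∈ Set.Ioi a, g x ≤ φ x := fun x hx => by
    have : 0 < x := ha.trans_lt hx
    refine mul_le_of_le_one_right (gaussianPDFReal_nonneg _ _ _) ?_
    rw [div_le_one (by positivity)]
    nlinarith
  have g_int := integrableOn_Ioi_deriv_of_nonneg' deriv_eq g_nonneg lim
  have : φ a / (a + 1) ≤ (gaussianReal 0 1).real (Set.Ici a) := calc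
    φ a / (a + 1) = ∫ x in Set.Ioi a, g x := by
        rw [integral_Ioi_of_hasDerivAt_of_nonneg' deriv_eq g_nonneg lim]
        ring
    _ ≤ ∫ x in Set.Ioi a, φ x := setIntegral_mono_on g_int
        (integrable_gaussianPDFReal 0 1).integrableOn measurableSet_Ioi g_le
    _ = (gaussianReal 0 1).real (Set.Ici a) := by
        rw [real_gaussianReal_eq_setIntegral _ one_ne_zero, integral_Ici_eq_integral_Ioi]
  rwa [div_le_iff₀' (by positivity)] at this

lemma real_gaussianReal_Icc_le_mul_gaussianPDFReal {m a b : ℝ} {v : ℝ≥0} (hv : v ≠ 0)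
    (ha : m ≤ a) (hab : a ≤ b) :
    (gaussianReal m v).real (Set.Icc a b) ≤ (b - a) * gaussianPDFReal m v a := calc
  (gaussianReal m v).real (Set.Icc a b) = ∫ x in Set.Icc a b, gaussianPDFReal m v x :=
      real_gaussianReal_eq_setIntegral m hv _
  _ ≤ ∫ _ in Set.Icc a b, gaussianPDFReal m v a :=
      setIntegral_mono_on (integrable_gaussianPDFReal m v).integrableOn (by simp)
        measurableSet_Icc fun x hx => antitoneOn_gaussianPDFReal m v ha (ha.trans hx.1) hx.1
  _ = (b - a) * gaussianPDFReal m v a := by simp [hab]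

lemma real_gaussianReal_withDensity_Icc_le_of_monotone {h : ℝ → ℝ≥0∞} (hh : Monotone h)
    [IsProbabilityMeasure ((gaussianReal 0 1).withDensity h)] {a b : ℝ} (ha : 0 ≤ a) (hab : a ≤ b) :
    ((gaussianReal 0 1).withDensity h).real (Set.Icc a b) ≤ (b - a) * (a + 1) := by
  set γ := gaussianReal 0 1
  set ρ := γ.withDensity h
  have φ_pos := gaussianPDFReal_pos 0 1 a one_ne_zero
  have hazard : ρ.real (Set.Icc a b) * γ.real (Set.Ici a) ≤ γ.real (Set.Icc a b) := by
    simpa only [measureReal_def, ENNReal.toReal_mul] using ENNReal.toReal_mono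
      (measure_ne_top _ _) (withDensity_Icc_mul_Ici_le_of_monotone hh a b)
  refine le_of_mul_le_mul_right ?_ φ_pos
  calc ρ.real (Set.Icc a b) * gaussianPDFReal 0 1 a
      ≤ ρ.real (Set.Icc a b) * ((a + 1) * γ.real (Set.Ici a)) := by
        gcongr
        exact gaussianPDFReal_le_mul_real_gaussianReal_Ici ha
    _ = (a + 1) * (ρ.real (Set.Icc a b) * γ.real (Set.Ici a)) := by ring
    _ ≤ (a + 1) * ((b - a) * gaussianPDFReal 0 1 a) := by
        refine mul_le_mul_of_nonneg_left (hazard.trans ?_) (by linarith)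
        exact real_gaussianReal_Icc_le_mul_gaussianPDFReal one_ne_zero ha hab
    _ = (b - a) * (a + 1) * gaussianPDFReal 0 1 a := by ring

end Gaussian

section FirstMaximizer

variable {ι Ω : Type*} [LinearOrder ι]

/-- The event that `j` is the least index at which the family `f` is maximal. Breaking ties by the
order on `ι` makes these events disjoint even when two members of the family coincide. -/
def firstMaximizerSet (f : ι → Ω → ℝ) (j : ι) : Set Ω :=
  {ω | ∀ k, f k ω ≤ f j ω ∧ (k < j → f k ω < f j ω)}

lemma pairwise_disjoint_firstMaximizerSet (f : ι → Ω → ℝ) :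
    Pairwise (Function.onFun Disjoint (firstMaximizerSet f)) := by
  refine pairwise_disjoint_on _ |>.2 fun i j hij => Set.disjoint_left.2 fun ω hi hj => ?_
  exact ((hj i).2 hij).not_ge (hi j).1

lemma iSup_eq_of_mem_firstMaximizerSet {f : ι → Ω → ℝ} {j : ι} {ω : Ω}
    (hω : ω ∈ firstMaximizerSet f j) : (⨆ i, f i ω) = f j ω :=
  have : Nonempty ι := ⟨j⟩
  le_antisymm (ciSup_le fun k => (hω k).1)
    (le_ciSup ⟨f j ω, Set.forall_mem_range.2 fun k => (hω k).1⟩ j)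

variable [Finite ι]

lemma iUnion_firstMaximizerSet [Nonempty ι] (f : ι → Ω → ℝ) :
    ⋃ j, firstMaximizerSet f j = Set.univ := by
  refine Set.eq_univ_of_forall fun ω => Set.mem_iUnion.2 ?_
  obtain ⟨j, hj, hj_min⟩ := wellFounded_lt.has_min {j | f j ω = ⨆ i, f i ω}
    exists_eq_ciSup_of_finite
  have le_max (k : ι) : f k ω ≤ f j ω :=
    (le_ciSup (Set.finite_range fun i => f i ω).bddAbove k).trans_eq hj.symm
  exact ⟨j, fun k => ⟨le_max k, fun hkj =>
    (le_max k).lt_of_ne fun h_eq => hj_min k (h_eq.trans hj) hkj⟩⟩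

variable [MeasurableSpace Ω] {P : Measure Ω} {f : ι → Ω → ℝ}

lemma nullMeasurableSet_firstMaximizerSet (hf : ∀ i, AEMeasurable (f i) P) (j : ι) :
    NullMeasurableSet (firstMaximizerSet f j) P := by
  simp only [firstMaximizerSet, Set.ofPred_forall, Set.ofPred_and]
  exact .iInter fun k => (nullMeasurableSet_le (hf k) (hf j)).inter
    (.iInter fun _ => nullMeasurableSet_lt (hf k) (hf j))

lemma map_iSup_eq_sum_map_restrict_firstMaximizerSet [Nonempty ι]
    (hf : ∀ i, AEMeasurable (f i) P) :
    P.map (fun ω => ⨆ i, f i ω) =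
      Measure.sum fun j => (P.restrict (firstMaximizerSet f j)).map (f j) := by
  have hA := nullMeasurableSet_firstMaximizerSet hf
  have decomposition : P = Measure.sum fun j => P.restrict (firstMaximizerSet f j) := by
    rw [← Measure.restrict_iUnion_ae (pairwise_disjoint_firstMaximizerSet f).aedisjoint hA,
      iUnion_firstMaximizerSet, Measure.restrict_univ]
  have max_meas : AEMeasurable (fun ω => ⨆ i, f i ω) P := .iSup hf
  conv_lhs => rw [decomposition]
  rw [Measure.map_sum (decomposition ▸ max_meas)]
  congr with j : 1
  refine Measure.map_congr ((ae_restrict_iff'₀ (hA j)).2 (.of_forall fun ω hω => ?_))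
  exact iSup_eq_of_mem_firstMaximizerSet hω

end FirstMaximizer

section MaximumLaw

variable {Ω : Type*} [MeasurableSpace Ω] {P : Measure Ω}

lemma exists_monotone_map_restrict_eq_withDensity {E : Type*} [MeasurableSpace E]
    [IsProbabilityMeasure P] {X : Ω → ℝ} {Y : Ω → E} (hX : AEMeasurable X P)
    (hY : AEMeasurable Y P) (hXY : IndepFun X Y P) {m : ℝ} {v : ℝ≥0} (hm : 0 ≤ m) (hv : v ≠ 0)
    (hX_law : P.map X = gaussianReal m v) {B : Set (ℝ × E)} (hB : MeasurableSet B)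
    (hB_upper : ∀ y, IsUpperSet {x | (x, y) ∈ B}) :
    ∃ h : ℝ → ℝ≥0∞, Monotone h ∧
      (P.restrict {ω | (X ω, Y ω) ∈ B}).map X = (gaussianReal 0 v).withDensity h := by
  set d : ℝ → ℝ≥0∞ := fun x => ENNReal.ofReal (Real.exp ((m * x - m ^ 2 / 2) / v))
  set g : ℝ → ℝ≥0∞ := fun x => P.map Y (Prod.mk x ⁻¹' B)
  have d_mono : Monotone d := fun x y hxy => by simp only [d]; gcongr
  have g_mono : Monotone g := fun x y hxy => measure_mono fun z hz => hB_upper z hxy hz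
  have : IsProbabilityMeasure (P.map Y) := Measure.isProbabilityMeasure_map hY
  refine ⟨d * g, d_mono.mul' g_mono, ?_⟩
  calc (P.restrict {ω | (X ω, Y ω) ∈ B}).map X
      = ((P.map fun ω => (X ω, Y ω)).restrict B).map Prod.fst := by
        rw [Measure.restrict_map_of_aemeasurable (hX.prodMk hY) hB,
          AEMeasurable.map_map_of_aemeasurable (by fun_prop) (hX.prodMk hY).restrict]
        rfl
    _ = (gaussianReal m v).withDensity g := by
        rw [(indepFun_iff_map_prod_eq_prod_map_map hX hY).1 hXY, hX_law,
          map_fst_restrict_prod _ _ hB]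
    _ = (gaussianReal 0 v).withDensity (d * g) := by
        rw [gaussianReal_eq_withDensity_exp m hv,
          withDensity_mul _ d_mono.measurable g_mono.measurable]

lemma two_mul_covariance_le_add_variance [IsFiniteMeasure P] {X Y : Ω → ℝ} (hX : MemLp X 2 P)
    (hY : MemLp Y 2 P) : 2 * cov[X, Y; P] ≤ Var[X; P] + Var[Y; P] := by
  have := variance_nonneg (X - Y) P
  rw [variance_sub hX hY] at this
  linarith

variable {ι : Type*} [Finite ι] {X : ι → Ω → ℝ}

lemma indepFun_sub_covariance_div_variance_mul (hX : HasGaussianLaw (fun ω i => X i ω) P) {j : ι}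
    (hj : Var[X j; P] ≠ 0) :
    IndepFun (X j) (fun ω k => X k ω - cov[X k, X j; P] / Var[X j; P] * X j ω) P := by
  have := hX.isProbabilityMeasure
  have : Fintype ι := Fintype.ofFinite ι
  have hL (i : ι) : MemLp (X i) 2 P := (hX.eval i).memLp_two
  let R : ι → Ω → ℝ := fun k ω => X k ω - cov[X k, X j; P] / Var[X j; P] * X j ω
  have joint : HasGaussianLaw (fun ω => (fun _ : Unit => X j ω, fun k => R k ω)) P := by
    let pr (k : ι) : (ι → ℝ) →L[ℝ] ℝ := ContinuousLinearMap.proj k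
    exact hX.map <| (ContinuousLinearMap.pi fun _ : Unit => pr j).prod
      (ContinuousLinearMap.pi fun k => pr k - (cov[X k, X j; P] / Var[X j; P]) • pr j)
  have uncorrelated (_ : Unit) (k : ι) : cov[X j, R k; P] = 0 := by
    rw [covariance_comm, covariance_fun_sub_left (hL k) ((hL j).const_mul _) (hL j),
      covariance_const_mul_left, covariance_self (hX.eval j).aemeasurable, div_mul_cancel₀ _ hj,
      sub_self]
  exact (joint.indepFun_of_covariance_eval (X := fun _ : Unit => X j) uncorrelated).comp
    (measurable_pi_apply ()) measurable_id

lemma exists_monotone_map_restrict_firstMaximizerSet_eq_withDensity [LinearOrder ι]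
    (hX : HasGaussianLaw (fun ω i => X i ω) P) {v : ℝ≥0} (hv : v ≠ 0)
    (hvar : ∀ i, Var[X i; P] = v) {j : ι} (hmean : 0 ≤ P[X j]) :
    ∃ h : ℝ → ℝ≥0∞, Monotone h ∧
      (P.restrict (firstMaximizerSet X j)).map (X j) = (gaussianReal 0 v).withDensity h := by
  have := hX.isProbabilityMeasure
  have hXm (i : ι) : AEMeasurable (X i) P := (hX.eval i).aemeasurable
  set c : ι → ℝ := fun k => cov[X k, X j; P] / Var[X j; P]
  have c_le_one (k : ι) : c k ≤ 1 := by
    refine div_le_one_of_le₀ ?_ (variance_nonneg _ _)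
    linarith [two_mul_covariance_le_add_variance (hX.eval k).memLp_two (hX.eval j).memLp_two,
      hvar k, hvar j]
  set B : Set (ℝ × (ι → ℝ)) :=
    {q | ∀ k, q.2 k ≤ (1 - c k) * q.1 ∧ (k < j → q.2 k < (1 - c k) * q.1)}
  have hB : MeasurableSet B := by
    simp only [B, Set.ofPred_forall, Set.ofPred_and]
    exact .iInter fun k => (measurableSet_le (by fun_prop) (by fun_prop)).inter
      (.iInter fun _ => measurableSet_lt (by fun_prop) (by fun_prop))
  have hB_upper (y : ι → ℝ) : IsUpperSet {x | (x, y) ∈ B} := fun x x' hxx' hx k => by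
    have slope := mul_le_mul_of_nonneg_left hxx' (sub_nonneg.2 (c_le_one k))
    exact ⟨(hx k).1.trans slope, fun hk => ((hx k).2 hk).trans_le slope⟩
  have event_eq : firstMaximizerSet X j = {ω | (X j ω, fun k => X k ω - c k * X j ω) ∈ B} := by
    simp only [firstMaximizerSet, B, Set.mem_ofPred_eq, sub_mul, one_mul, sub_le_sub_iff_right,
      sub_lt_sub_iff_right]
  rw [event_eq]
  refine exists_monotone_map_restrict_eq_withDensity (hXm j)
    (aemeasurable_pi_lambda _ fun k => (hXm k).sub ((hXm j).const_mul _))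
    (indepFun_sub_covariance_div_variance_mul hX ?_) hmean hv ?_ hB hB_upper
  · rwa [hvar, NNReal.coe_ne_zero]
  · rw [(hX.eval j).map_eq_gaussianReal, hvar, Real.toNNReal_coe]

theorem exists_monotone_map_iSup_eq_withDensity [Nonempty ι]
    (hX : HasGaussianLaw (fun ω i => X i ω) P) {v : ℝ≥0} (hv : v ≠ 0)
    (hvar : ∀ i, Var[X i; P] = v) (hmean : ∀ i, 0 ≤ P[X i]) :
    ∃ h : ℝ → ℝ≥0∞, Monotone h ∧
      P.map (fun ω => ⨆ i, X i ω) = (gaussianReal 0 v).withDensity h := by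
  let : LinearOrder ι := IsWellOrder.linearOrder WellOrderingRel
  choose h h_mono h_law using fun j =>
    exists_monotone_map_restrict_firstMaximizerSet_eq_withDensity hX hv hvar (hmean j)
  refine ⟨∑' j, h j, fun x y hxy => ?_, ?_⟩
  · simp only [ENNReal.tsum_apply]
    exact ENNReal.tsum_le_tsum fun j => h_mono j hxy
  · rw [map_iSup_eq_sum_map_restrict_firstMaximizerSet fun i => (hX.eval i).aemeasurable,
      withDensity_tsum fun j => (h_mono j).measurable]
    simp_rw [h_law]

end MaximumLaw

section AntiConcentration

variable {Ω ι : Type*} [MeasurableSpace Ω] {P : Measure Ω}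

lemma hasGaussianLaw_mul_add_const [Finite ι] {X : ι → Ω → ℝ}
    (hX : HasGaussianLaw (fun ω i => X i ω) P) (c b : ι → ℝ) :
    HasGaussianLaw (fun ω i => c i * X i ω + b i) P := by
  have : Fintype ι := Fintype.ofFinite ι
  let L : (ι → ℝ) →L[ℝ] (ι → ℝ) :=
    ContinuousLinearMap.pi fun i => c i • ContinuousLinearMap.proj i
  have hL := hX.map L
  have := hL.isGaussian_map
  refine ⟨?_⟩
  have comp_eq : (fun ω i => c i * X i ω + b i) = (fun y => y + b) ∘ (L ∘ fun ω i => X i ω) := rfl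
  rw [comp_eq, ← AEMeasurable.map_map_of_aemeasurable (by fun_prop) hL.aemeasurable]
  infer_instance

lemma hasGaussianLaw_of_forall_map_sum_eq_gaussianReal [Fintype ι] {Z : Ω → ι → ℝ}
    (h : ∀ t : ι → ℝ, ∃ m v, P.map (fun ω => ∑ j, t j * Z ω j) = gaussianReal m v) :
    HasGaussianLaw Z P := by
  classical
  have hZ : AEMeasurable Z P := aemeasurable_pi_iff.2 fun j => by
    obtain ⟨m, v, hmv⟩ := h (Pi.single j 1)
    have map_ne_zero : P.map (fun ω => ∑ k, (Pi.single j 1 : ι → ℝ) k * Z ω k) ≠ 0 :=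
      hmv ▸ IsProbabilityMeasure.ne_zero (gaussianReal m v)
    simpa [Pi.single_apply] using AEMeasurable.of_map_ne_zero map_ne_zero
  refine ⟨isGaussian_of_map_eq_gaussianReal fun L => ?_⟩
  obtain ⟨m, v, hmv⟩ := h fun j => L (Pi.single j 1)
  refine ⟨m, v, ?_⟩
  rw [AEMeasurable.map_map_of_aemeasurable (by fun_prop) hZ, ← hmv]
  congr with ω
  calc L (Z ω) = ∑ j, L (Pi.single j (Z ω j)) := by rw [← map_sum, Finset.univ_sum_single]
    _ = ∑ j, L (Pi.single j 1) * Z ω j := Finset.sum_congr rfl fun j _ => by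
      rw [← mul_one (Z ω j), ← smul_eq_mul, Pi.single_smul, map_smul, smul_eq_mul, smul_eq_mul,
        mul_one, mul_comm]

lemma integral_eval_eq_zero_of_forall_map_sum_eq_gaussianReal [Fintype ι] {Z : Ω → ι → ℝ}
    (h : ∀ t : ι → ℝ, ∃ v, P.map (fun ω => ∑ j, t j * Z ω j) = gaussianReal 0 v) (j : ι) :
    ∫ ω, Z ω j ∂P = 0 := by
  classical
  have hZ : HasGaussianLaw Z P :=
    hasGaussianLaw_of_forall_map_sum_eq_gaussianReal fun t => ⟨0, h t⟩
  obtain ⟨v, hv⟩ := h (Pi.single j 1)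
  have coord_law : P.map (fun ω => Z ω j) = gaussianReal 0 v := by
    simpa [Pi.single_apply] using hv
  calc ∫ ω, Z ω j ∂P = ∫ x, x ∂P.map (fun ω => Z ω j) :=
        (integral_map (hZ.eval j).aemeasurable aestronglyMeasurable_id).symm
    _ = 0 := by rw [coord_law, integral_id_gaussianReal]

lemma norm_eq_iSup_sumElim_neg [Fintype ι] [Nonempty ι] (z : ι → ℝ) :
    ‖z‖ = ⨆ k, Sum.elim z (-z) k := by
  have bdd : BddAbove (Set.range (Sum.elim z (-z))) := (Set.finite_range _).bddAbove
  apply le_antisymm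
  · refine (pi_norm_le_iff_of_nonempty _).2 fun i => abs_le'.2 ⟨?_, ?_⟩
    · exact le_ciSup bdd (.inl i)
    · exact le_ciSup bdd (.inr i)
  · refine ciSup_le (Sum.forall.2 ⟨fun i => ?_, fun i => ?_⟩)
    · exact (le_abs_self _).trans (norm_le_pi_norm z i)
    · exact (neg_le_abs _).trans (norm_le_pi_norm z i)

lemma iSup_sub_div_add_div_mem_Icc [Finite ι] [Nonempty ι] {σ : ℝ} (hσ : 0 < σ) {s z : ι → ℝ}
    (hs : ∀ i, σ ≤ s i) {x y : ℝ} (hz : (⨆ i, z i) ∈ Set.Icc x y) :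
    (⨆ i, ((z i - x) / s i + x / σ)) ∈ Set.Icc (x / σ) (y / σ) := by
  have s_pos (i : ι) : 0 < s i := hσ.trans_le (hs i)
  have z_le (i : ι) : z i ≤ y := (le_ciSup (Set.finite_range z).bddAbove i).trans hz.2
  obtain ⟨i, hi⟩ := exists_eq_ciSup_of_finite (f := z)
  have x_le : x ≤ z i := hi ▸ hz.1
  refine ⟨le_ciSup_of_le (Set.finite_range _).bddAbove i ?_, ciSup_le fun k => ?_⟩
  · exact le_add_of_nonneg_left (div_nonneg (sub_nonneg.2 x_le) (s_pos i).le)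
  · calc (z k - x) / s k + x / σ
        ≤ (y - x) / s k + x / σ := by have := s_pos k; gcongr; exact z_le k
      _ ≤ (y - x) / σ + x / σ := by
          have : x ≤ y := x_le.trans (z_le i)
          gcongr
          exact hs k
      _ = y / σ := by ring

section Maximum

variable [Finite ι] [Nonempty ι] {X : ι → Ω → ℝ}

lemma measureReal_iSup_mem_Icc_le_of_variance_eq_one
    (hX : HasGaussianLaw (fun ω i => X i ω) P) (hvar : ∀ i, Var[X i; P] = 1)
    (hmean : ∀ i, 0 ≤ P[X i]) {a b : ℝ} (ha : 0 ≤ a) (hab : a ≤ b) :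
    P.real {ω | (⨆ i, X i ω) ∈ Set.Icc a b} ≤ (b - a) * (a + 1) := by
  have := hX.isProbabilityMeasure
  have max_meas : AEMeasurable (fun ω => ⨆ i, X i ω) P := .iSup fun i => (hX.eval i).aemeasurable
  obtain ⟨h, h_mono, h_law⟩ :=
    exists_monotone_map_iSup_eq_withDensity hX one_ne_zero (by simpa using hvar) hmean
  have : IsProbabilityMeasure ((gaussianReal 0 1).withDensity h) :=
    h_law ▸ Measure.isProbabilityMeasure_map max_meas
  have event_eq : P.real {ω | (⨆ i, X i ω) ∈ Set.Icc a b} =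
      ((gaussianReal 0 1).withDensity h).real (Set.Icc a b) := by
    rw [← h_law, measureReal_def, measureReal_def,
      Measure.map_apply_of_aemeasurable max_meas measurableSet_Icc]
    rfl
  exact event_eq.trans_le (real_gaussianReal_withDensity_Icc_le_of_monotone h_mono ha hab)

lemma measureReal_iSup_mem_Icc_le_of_sq_le_variance
    (hX : HasGaussianLaw (fun ω i => X i ω) P) {σ : ℝ} (hσ : 0 < σ)
    (hvar : ∀ i, σ ^ 2 ≤ Var[X i; P]) (hmean : ∀ i, 0 ≤ P[X i]) {x y : ℝ} (hx : 0 ≤ x)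
    (hxy : x ≤ y) :
    P.real {ω | (⨆ i, X i ω) ∈ Set.Icc x y} ≤ (y - x) / σ * (x / σ + 1) := by
  have := hX.isProbabilityMeasure
  set s : ι → ℝ := fun i => √Var[X i; P]
  have σ_le (i : ι) : σ ≤ s i := Real.le_sqrt_of_sq_le (hvar i)
  have s_pos (i : ι) : 0 < s i := hσ.trans_le (σ_le i)
  -- The shift makes the crossings `X i = x` all happen at `W i = x / σ`, while the means stay
  -- nonnegative because `σ ≤ s i`.
  set W : ι → Ω → ℝ := fun i ω => (s i)⁻¹ * X i ω + (x / σ - x / s i)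
  have W_eq (i : ι) (ω : Ω) : W i ω = (X i ω - x) / s i + x / σ := by simp only [W]; ring
  have W_var (i : ι) : Var[W i; P] = 1 := by
    rw [variance_add_const ((hX.eval i).aemeasurable.const_mul _).aestronglyMeasurable,
      variance_const_mul, inv_pow, Real.sq_sqrt (variance_nonneg _ _)]
    exact inv_mul_cancel₀ ((pow_pos hσ 2).trans_le (hvar i)).ne'
  have W_mean (i : ι) : 0 ≤ P[W i] := by
    simp only [W]
    rw [integral_add ((hX.eval i).integrable.const_mul _) (integrable_const _),
      integral_const_mul, integral_const, probReal_univ, one_smul]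
    exact add_nonneg (mul_nonneg (inv_nonneg.2 (s_pos i).le) (hmean i))
      (sub_nonneg.2 (div_le_div_of_nonneg_left hx hσ (σ_le i)))
  have event_subset : {ω | (⨆ i, X i ω) ∈ Set.Icc x y} ⊆
      {ω | (⨆ i, W i ω) ∈ Set.Icc (x / σ) (y / σ)} := fun ω hω => by
    simpa only [Set.mem_ofPred_eq, W_eq] using iSup_sub_div_add_div_mem_Icc hσ σ_le hω
  calc P.real {ω | (⨆ i, X i ω) ∈ Set.Icc x y}
      ≤ P.real {ω | (⨆ i, W i ω) ∈ Set.Icc (x / σ) (y / σ)} := measureReal_mono event_subset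
    _ ≤ (y / σ - x / σ) * (x / σ + 1) :=
        measureReal_iSup_mem_Icc_le_of_variance_eq_one (hasGaussianLaw_mul_add_const hX _ _)
          W_var W_mean (by positivity) (by gcongr)
    _ = (y - x) / σ * (x / σ + 1) := by rw [sub_div]

end Maximum

variable [Fintype ι] [Nonempty ι] {Z : Ω → ι → ℝ}

lemma measureReal_norm_mem_Icc_le (hZ : HasGaussianLaw Z P) (hmean : ∀ j, ∫ ω, Z ω j ∂P = 0)
    {σ : ℝ} (hσ : 0 < σ) (hvar : ∀ j, σ ^ 2 ≤ ∫ ω, Z ω j ^ 2 ∂P) {x y : ℝ} (hx : 0 ≤ x)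
    (hxy : x ≤ y) :
    P.real {ω | ‖Z ω‖ ∈ Set.Icc x y} ≤ (y - x) / σ * (x / σ + 1) := by
  have hZ_coord (j : ι) : HasGaussianLaw (fun ω => Z ω j) P := hZ.eval j
  have coord_var (j : ι) : Var[fun ω => Z ω j; P] = ∫ ω, Z ω j ^ 2 ∂P :=
    variance_of_integral_eq_zero (hZ_coord j).aemeasurable (hmean j)
  let X : ι ⊕ ι → Ω → ℝ := Sum.elim (fun j ω => Z ω j) (fun j ω => -Z ω j)
  have X_gauss : HasGaussianLaw (fun ω k => X k ω) P := by
    let L : (ι → ℝ) →L[ℝ] (ι ⊕ ι → ℝ) := ContinuousLinearMap.pi <|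
      Sum.elim (fun j => ContinuousLinearMap.proj j) (fun j => -ContinuousLinearMap.proj j)
    convert! hZ.map L using 1
    ext ω (j | j) <;> rfl
  have X_var : ∀ k, σ ^ 2 ≤ Var[X k; P] := Sum.forall.2
    ⟨fun j => (hvar j).trans_eq (coord_var j).symm,
      fun j => (hvar j).trans_eq (variance_fun_neg.trans (coord_var j)).symm⟩
  have X_mean : ∀ k, 0 ≤ P[X k] := Sum.forall.2
    ⟨fun j => (hmean j).ge, fun j => by simp [X, integral_neg, hmean j]⟩
  have norm_eq (ω : Ω) : ‖Z ω‖ = ⨆ k, X k ω := by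
    rw [norm_eq_iSup_sumElim_neg]
    congr with (j | j) <;> rfl
  simpa only [norm_eq] using
    measureReal_iSup_mem_Icc_le_of_sq_le_variance X_gauss hσ X_var X_mean hx hxy

theorem gaussian_sup_gine_anti_concentration_general
    (hGauss : ∀ t : ι → ℝ, ∃ v : ℝ≥0,
      P.map (fun ω => ∑ j, t j * Z ω j) = gaussianReal 0 v)
    {σ : ℝ} (hσ : 0 < σ) (hvar : ∀ j, σ ^ 2 ≤ ∫ ω, (Z ω j) ^ 2 ∂P)
    {ε lam : ℝ} (hε : 0 ≤ ε) (hlam : 0 ≤ lam) :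
    P.real {ω | lam - ε ≤ ‖Z ω‖ ∧ ‖Z ω‖ ≤ lam + ε} ≤ 2 * ε * (σ⁻¹ * (1 + lam / σ)) := by
  have hZ : HasGaussianLaw Z P :=
    hasGaussianLaw_of_forall_map_sum_eq_gaussianReal fun t => ⟨0, hGauss t⟩
  have hmean := integral_eval_eq_zero_of_forall_map_sum_eq_gaussianReal hGauss
  have := hZ.isProbabilityMeasure
  rcases le_total ε lam with h | h
  · calc P.real {ω | lam - ε ≤ ‖Z ω‖ ∧ ‖Z ω‖ ≤ lam + ε}
      ≤ (lam + ε - (lam - ε)) / σ * ((lam - ε) / σ + 1) :=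
        measureReal_norm_mem_Icc_le hZ hmean hσ hvar (by linarith) (by linarith)
    _ = 2 * ε * (σ⁻¹ * (1 + (lam - ε) / σ)) := by ring
    _ ≤ 2 * ε * (σ⁻¹ * (1 + lam / σ)) := by gcongr; linarith
  · calc P.real {ω | lam - ε ≤ ‖Z ω‖ ∧ ‖Z ω‖ ≤ lam + ε}
      ≤ P.real {ω | ‖Z ω‖ ∈ Set.Icc 0 (lam + ε)} :=
        measureReal_mono fun ω hω => ⟨norm_nonneg _, hω.2⟩
    _ ≤ (lam + ε - 0) / σ * (0 / σ + 1) :=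
        measureReal_norm_mem_Icc_le hZ hmean hσ hvar le_rfl (by linarith)
    _ = (lam + ε) * (σ⁻¹ * (1 + 0)) := by ring
    _ ≤ 2 * ε * (σ⁻¹ * (1 + lam / σ)) := by gcongr; exacts [by linarith, by positivity]

end AntiConcentration

/-- **Lemma S.1.1** (Giné–Zinn type anti-concentration): if `Z` is a centered Gaussian random
vector in `ℝ^p` with `E[Z(j)²] ≥ σ² > 0` for every coordinate `j`, then for every
`0 < ε ≤ σ/2` and every `λ > 0`,
`P(λ − ε ≤ max_j |Z(j)| ≤ λ + ε) ≤ 2 ε K(λ)` where `K(λ) = 2σ⁻¹(2.6 + λ/σ)`. -/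
theorem gaussian_sup_gine_anti_concentration
    {Ω : Type*} [MeasurableSpace Ω] (P : Measure Ω) [IsProbabilityMeasure P]
    {p : ℕ} (hp : 0 < p) (Z : Ω → Fin p → ℝ) (hZmeas : Measurable Z)
    (hGauss : ∀ t : Fin p → ℝ, ∃ v : NNReal,
      P.map (fun ω => ∑ j, t j * Z ω j) = gaussianReal 0 v)
    (σ : ℝ) (hσ : 0 < σ)
    (hvar : ∀ j, σ ^ 2 ≤ ∫ ω, (Z ω j) ^ 2 ∂P) :
    ∀ ε : ℝ, 0 < ε → ε ≤ σ / 2 → ∀ lam : ℝ, 0 < lam →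
      (P {ω | lam - ε ≤ ‖Z ω‖ ∧ ‖Z ω‖ ≤ lam + ε}).toReal ≤
        2 * ε * (2 * σ⁻¹ * (2.6 + lam / σ)) := by
  intro ε hε _ lam hlam
  have : Nonempty (Fin p) := ⟨⟨0, hp⟩⟩
  refine (gaussian_sup_gine_anti_concentration_general hGauss hσ hvar hε.le hlam.le).trans ?_
  gcongr
  · exact le_mul_of_one_le_left (inv_nonneg.2 hσ.le) one_le_two
  · norm_num
end

section
/- Fix r ≥ 0, ε > 0 and a positive integer p. Let β = 2log(2p)/ε, let F_β(z) := β^{-1} log Σ_{j=1}^{2p} exp(β z(j)) for z ∈ ℝ^{2p} (the softmax), let g₀: ℝ → [0,1] be defined by g₀(t) = 1 for t ≤ 0, g₀(t) = 30∫_t^1 s²(1−s)² ds for 0 ≤ t ≤ 1, and g₀(t) = 0 for t ≥ 1, and for x ∈ ℝ^p set z_x := (xᵀ, −xᵀ)ᵀ ∈ ℝ^{2p} and φ(x) := g₀(2(F_β(z_x − r·𝟏_{2p}) − ε/2)/ε), where 𝟏_{2p} is the all-ones vector. Then φ(x) = 1 whenever max_j |x(j)| ≤ r, φ(x) = 0 whenever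 max_j |x(j)| > r + ε; equivalently 𝟙{‖x‖∞ ≤ r} ≤ φ(x) ≤ 𝟙{‖x‖∞ ≤ r + ε} for all x ∈ ℝ^p. -/
/-!
Since `‖x‖∞` is the maximum of the `2p` entries of `(x, -x)`, the softmax of these entries shifted
by `r` lies between `‖x‖∞ - r` and `‖x‖∞ - r + log (2p) / β`, and the choice of `β` makes the error
at most `ε / 2`. The rescaling inside `φ` therefore sends the case `‖x‖∞ ≤ r` to arguments `≤ 0`
and the case `‖x‖∞ > r + ε` to arguments `≥ 1`, where `g₀` is constant.
-/

open MeasureTheory ProbabilityTheory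

/-- The function `g₀` used in the smooth approximation of indicators of `ℓ∞` balls:
`g₀(t) = 1` for `t ≤ 0`, `g₀(t) = 30 ∫_t^1 s²(1-s)² ds` for `0 ≤ t ≤ 1`, `g₀(t) = 0`
for `t ≥ 1`. -/
noncomputable def g0 (t : ℝ) : ℝ :=
  if t ≤ 0 then 1 else if 1 ≤ t then 0 else 30 * ∫ s in t..1, s ^ 2 * (1 - s) ^ 2

theorem g0_of_nonpos {t : ℝ} (ht : t ≤ 0) : g0 t = 1 :=
  if_pos ht

theorem g0_of_one_le {t : ℝ} (ht : 1 ≤ t) : g0 t = 0 := by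
  rw [g0, if_neg (zero_lt_one.trans_le ht).not_ge, if_pos ht]

theorem integral_sq_mul_one_sub_sq : ∫ s in (0 : ℝ)..1, s ^ 2 * (1 - s) ^ 2 = 1 / 30 := by
  have hderiv (s : ℝ) : HasDerivAt (fun s : ℝ => s ^ 3 / 3 - s ^ 4 / 2 + s ^ 5 / 5)
      (s ^ 2 * (1 - s) ^ 2) s :=
    ((((hasDerivAt_pow 3 s).div_const 3).sub ((hasDerivAt_pow 4 s).div_const 2)).add
      ((hasDerivAt_pow 5 s).div_const 5)).congr_deriv (by norm_num; ring)
  rw [intervalIntegral.integral_eq_sub_of_hasDerivAt (fun s _ => hderiv s)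
    (Continuous.intervalIntegrable (by fun_prop) 0 1)]
  norm_num

theorem g0_mem_Icc (t : ℝ) : g0 t ∈ Set.Icc 0 1 := by
  rcases le_total t 0 with ht0 | ht0
  · simp [g0_of_nonpos ht0]
  rcases le_total 1 t with ht1 | ht1
  · simp [g0_of_one_le ht1]
  have hnonneg (s : ℝ) : 0 ≤ s ^ 2 * (1 - s) ^ 2 := by positivity
  have htail_nonneg : 0 ≤ ∫ s in t..1, s ^ 2 * (1 - s) ^ 2 :=
    intervalIntegral.integral_nonneg ht1 fun s _ => hnonneg s
  have htail_le : ∫ s in t..1, s ^ 2 * (1 - s) ^ 2 ≤ 1 / 30 :=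
    integral_sq_mul_one_sub_sq ▸ intervalIntegral.integral_mono_interval ht0 ht1 le_rfl
      (ae_of_all _ hnonneg) (Continuous.intervalIntegrable (by fun_prop) 0 1)
  unfold g0
  split_ifs <;> constructor <;> linarith

/-- The softmax function `F_β(z) = β⁻¹ log ∑ j, exp (β z j)`, a smooth upper approximation of
`max_j z j` for `β > 0`. -/
noncomputable def softmax {κ : Type*} [Fintype κ] (β : ℝ) (z : κ → ℝ) : ℝ :=
  β⁻¹ * Real.log (∑ j, Real.exp (β * z j))

section Softmax

variable {κ : Type*} [Fintype κ] {β : ℝ}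

theorem le_softmax (hβ : 0 < β) (z : κ → ℝ) (j : κ) : z j ≤ softmax β z := by
  rw [softmax, le_inv_mul_iff₀ hβ, ← Real.log_exp (β * z j)]
  exact Real.log_le_log (Real.exp_pos _)
    (Finset.single_le_sum (f := fun j => Real.exp (β * z j)) (fun _ _ => (Real.exp_pos _).le)
      (Finset.mem_univ j))

theorem softmax_le_add_log_card_div [Nonempty κ] (hβ : 0 < β) {z : κ → ℝ} {m : ℝ}
    (hz : ∀ j, z j ≤ m) : softmax β z ≤ m + Real.log (Fintype.card κ) / β := by
  have hsum : ∑ j, Real.exp (β * z j) ≤ Fintype.card κ * Real.exp (β * m) := by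
    rw [← nsmul_eq_mul]
    exact Finset.sum_le_card_nsmul _ _ _ fun j _ => by gcongr; exact hz j
  have hsum_pos : 0 < ∑ j, Real.exp (β * z j) :=
    Finset.sum_pos (fun _ _ => Real.exp_pos _) Finset.univ_nonempty
  calc softmax β z ≤ β⁻¹ * Real.log (Fintype.card κ * Real.exp (β * m)) :=
        mul_le_mul_of_nonneg_left (Real.log_le_log hsum_pos hsum) (inv_pos.2 hβ).le
    _ = m + Real.log (Fintype.card κ) / β := by
        rw [Real.log_mul (by simp) (Real.exp_ne_zero _), Real.log_exp]
        field_simp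
        ring

end Softmax

section LinftyBall

variable {ι : Type*} [Fintype ι] {β r ε : ℝ}

theorem sumElim_neg_le_norm (x : ι → ℝ) (j : ι ⊕ ι) : Sum.elim x (-x) j ≤ ‖x‖ := by
  rcases j with i | i
  · exact (le_abs_self (x i)).trans (norm_le_pi_norm x i)
  · exact (neg_le_abs (x i)).trans (norm_le_pi_norm x i)

theorem norm_sub_le_softmax [Nonempty ι] (hβ : 0 < β) (r : ℝ) (x : ι → ℝ) :
    ‖x‖ - r ≤ softmax β (fun j => Sum.elim x (-x) j - r) := by
  have hle := le_softmax hβ fun j => Sum.elim x (-x) j - r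
  rw [sub_le_iff_le_add, pi_norm_le_iff_of_nonempty]
  exact fun i => abs_le'.2
    ⟨sub_le_iff_le_add.1 (hle (Sum.inl i)), sub_le_iff_le_add.1 (hle (Sum.inr i))⟩

theorem softmax_le_norm_sub_add [Nonempty ι] (hβ : 0 < β) (r : ℝ) (x : ι → ℝ) :
    softmax β (fun j => Sum.elim x (-x) j - r) ≤
      ‖x‖ - r + Real.log (2 * Fintype.card ι) / β := by
  have hcard : (Fintype.card (ι ⊕ ι) : ℝ) = 2 * Fintype.card ι := by
    rw [Fintype.card_sum, Nat.cast_add, two_mul]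
  rw [← hcard]
  exact softmax_le_add_log_card_div hβ fun j => sub_le_sub_right (sumElim_neg_le_norm x j) r

/-- The smooth surrogate `φ` for the indicator of the `ℓ∞` ball of radius `r`, with transition
layer of width `ε`. The stacked vector `(xᵀ, -xᵀ)ᵀ` is indexed by `ι ⊕ ι`. -/
noncomputable def smoothLinftyBall (β r ε : ℝ) (x : ι → ℝ) : ℝ :=
  g0 (2 * (softmax β (fun j => Sum.elim x (-x) j - r) - ε / 2) / ε)

theorem smoothLinftyBall_eq_one [Nonempty ι] (hε : 0 < ε) (hβ : 0 < β)
    (hlog : Real.log (2 * Fintype.card ι) / β ≤ ε / 2) {x : ι → ℝ} (hx : ‖x‖ ≤ r) :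
    smoothLinftyBall β r ε x = 1 := by
  have hsoftmax := softmax_le_norm_sub_add hβ r x
  exact g0_of_nonpos (div_nonpos_of_nonpos_of_nonneg (by linarith) hε.le)

theorem smoothLinftyBall_eq_zero [Nonempty ι] (hε : 0 < ε) (hβ : 0 < β) {x : ι → ℝ}
    (hx : r + ε ≤ ‖x‖) : smoothLinftyBall β r ε x = 0 := by
  have hsoftmax := norm_sub_le_softmax hβ r x
  exact g0_of_one_le ((one_le_div hε).2 (by linarith))

theorem smooth_linfty_ball_indicator_approximation_general [Nonempty ι] (hε : 0 < ε)
    (hβ : 2 * Real.log (2 * Fintype.card ι) / ε ≤ β) (x : ι → ℝ) :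
    (‖x‖ ≤ r → smoothLinftyBall β r ε x = 1) ∧
    (r + ε < ‖x‖ → smoothLinftyBall β r ε x = 0) ∧
    Set.indicator {y : ι → ℝ | ‖y‖ ≤ r} (fun _ => (1 : ℝ)) x ≤ smoothLinftyBall β r ε x ∧
    smoothLinftyBall β r ε x ≤ Set.indicator {y : ι → ℝ | ‖y‖ ≤ r + ε} (fun _ => (1 : ℝ)) x := by
  have hcard : (1 : ℝ) ≤ Fintype.card ι := by exact_mod_cast Fintype.card_pos (α := ι)
  have hlog_pos : 0 < Real.log (2 * Fintype.card ι) := Real.log_pos (by linarith)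
  have hβ_pos : 0 < β := (by positivity : 0 < 2 * Real.log (2 * Fintype.card ι) / ε).trans_le hβ
  have hlog : Real.log (2 * Fintype.card ι) / β ≤ ε / 2 := by
    rw [div_le_iff₀ hε] at hβ
    rw [div_le_iff₀ hβ_pos]
    linarith
  have heq_one {y : ι → ℝ} (hy : ‖y‖ ≤ r) := smoothLinftyBall_eq_one hε hβ_pos hlog hy
  have heq_zero {y : ι → ℝ} (hy : r + ε < ‖y‖) := smoothLinftyBall_eq_zero hε hβ_pos hy.le
  exact ⟨heq_one, heq_zero,
    Set.indicator_le' (fun y hy => (heq_one hy).ge) (fun _ _ => (g0_mem_Icc _).1) x,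
    Set.le_indicator (fun _ _ => (g0_mem_Icc _).2) (fun y hy => (heq_zero (not_le.1 hy)).le) x⟩

end LinftyBall

/-- **Lemma 2.1(1)** (smooth approximation of the indicator of the `ℓ∞` ball): with
`β = 2 log(2p)/ε`, the softmax `F_β` and `φ(x) = g₀(2(F_β(z_x − r 1) − ε/2)/ε)` where
`z_x = (xᵀ, −xᵀ)ᵀ`, one has `φ(x) = 1` whenever `‖x‖∞ ≤ r` and `φ(x) = 0` whenever
`‖x‖∞ > r + ε`; equivalently `𝟙{‖x‖∞ ≤ r} ≤ φ(x) ≤ 𝟙{‖x‖∞ ≤ r + ε}`. -/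
theorem smooth_linfty_ball_indicator_approximation
    (p : ℕ) (hp : 0 < p) (r ε : ℝ) (hr : 0 ≤ r) (hε : 0 < ε)
    (β : ℝ) (hβ : β = 2 * Real.log (2 * p) / ε)
    (Fβ : (Fin p ⊕ Fin p → ℝ) → ℝ)
    (hF : ∀ z : Fin p ⊕ Fin p → ℝ, Fβ z = β⁻¹ * Real.log (∑ j, Real.exp (β * z j)))
    (φ : (Fin p → ℝ) → ℝ)
    (hφ : ∀ x : Fin p → ℝ,
      φ x = g0 (2 * (Fβ (fun j => Sum.elim x (fun j' => -x j') j - r) - ε / 2) / ε)) :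
    ∀ x : Fin p → ℝ,
      (‖x‖ ≤ r → φ x = 1) ∧
      (r + ε < ‖x‖ → φ x = 0) ∧
      Set.indicator {y : Fin p → ℝ | ‖y‖ ≤ r} (fun _ => (1 : ℝ)) x ≤ φ x ∧
      φ x ≤ Set.indicator {y : Fin p → ℝ | ‖y‖ ≤ r + ε} (fun _ => (1 : ℝ)) x := by
  have : Nonempty (Fin p) := Fin.pos_iff_nonempty.1 hp
  obtain rfl : φ = smoothLinftyBall β r ε := funext fun x => by rw [hφ, hF]; rfl
  exact smooth_linfty_ball_indicator_approximation_general hε (by simp [hβ])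
end

section
/- Let X = (X(1),…,X(p)) be an ℝ^p-valued random vector such that max_{1≤j≤p} ‖X(j)‖_{ψ_α} ≤ K_p for some α > 0 and 0 ≤ K_p < ∞. Then (1) for all q ≥ 1, E[‖X‖∞^q] ≤ K_p^q (2^{1/q}(6q/(eα))^{1/α} + 2^{1/α}(log p)^{1/α})^q; and (2) if moreover α ≥ 1, then E[exp(‖X‖∞ / (3^{1/α} (log 2)^{(1−α)/α} K_p (1 + (log p)^{1/α})))] ≤ 2. -/
open MeasureTheory ProbabilityTheory

/-- The `ψ_α`-Orlicz (quasi-)norm of a real random variable `W` on `(Ω, P)`: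
`‖W‖_{ψ_α} = inf {c > 0 : E[exp((|W|/c)^α) − 1] ≤ 1}` (valued in `ℝ≥0∞`). -/
noncomputable def psiNorm {Ω : Type*} [MeasurableSpace Ω] (α : ℝ) (P : Measure Ω)
    (W : Ω → ℝ) : ENNReal :=
  sInf {c : ENNReal | c ≠ 0 ∧ c ≠ ⊤ ∧
    ∫⁻ ω, ENNReal.ofReal (Real.exp ((|W ω| / c.toReal) ^ α) - 1) ∂P ≤ 1}

/-!
For `K > 0`, Fatou's lemma shows that the bound `‖X j‖_{ψ_α} ≤ K` is attained at `K` itself, so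
`E exp((|X j| / K) ^ α) ≤ 2` for each coordinate; since `‖X‖` always equals the modulus of some
coordinate, `E exp(Y ^ α) ≤ 2 p` for `Y = ‖X‖ / K`. Both bounds only use this inequality.

For the moments, let `b ^ α = 2 log p`. Where `Y ≥ b`, the excess satisfies
`(Y - b) ^ α ≤ Y ^ α ≤ 2 (Y ^ α - log p)`, and `x ^ r ≤ (r / e) ^ r * exp x` turns this into
a bound on `E (Y - b)₊ ^ q` that does not depend on `p`; Minkowski's inequality adds `b` back.

For the exponential moment, Bernoulli's inequality bounds `Y / (1 + (log p) ^ (1 / α))` by a convex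
combination of `Y ^ α / (1 + log p)` and `1`. Jensen's inequality `E exp(a Y ^ α) ≤ (2 p) ^ a`, for
`a = log 2 / (α (1 + log p))`, applies to the first term. This gives the constant `1 / log 2`,
which is at most `3 ^ (1 / α) * (log 2) ^ ((1 - α) / α)`; likewise the moment bound
holds with `2` in place of `6`.
-/

open Filter Topology
open scoped ENNReal

section RealInequalities

lemma rpow_le_div_exp_one_rpow_mul_exp {r x : ℝ} (hr : 0 < r) (hx : 0 ≤ x) :
    x ^ r ≤ (r / Real.exp 1) ^ r * Real.exp x := by
  have hxr : x ≤ r / Real.exp 1 * Real.exp (x / r) := by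
    have h : x / r ≤ Real.exp (x / r - 1) := by simpa using Real.add_one_le_exp (x / r - 1)
    calc x = r * (x / r) := by field_simp
      _ ≤ r * Real.exp (x / r - 1) := by gcongr
      _ = r / Real.exp 1 * Real.exp (x / r) := by rw [Real.exp_sub]; ring
  calc x ^ r ≤ (r / Real.exp 1 * Real.exp (x / r)) ^ r := by gcongr
    _ = (r / Real.exp 1) ^ r * Real.exp x := by
      rw [Real.mul_rpow (by positivity) (by positivity), ← Real.exp_mul, div_mul_cancel₀ _ hr.ne']

lemma max_sub_zero_rpow_le {α q t b L : ℝ} (hα : 0 < α) (hq : 0 < q) (hb : 0 ≤ b)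
    (hbL : b ^ α = 2 * L) :
    max (t - b) 0 ^ q ≤
      (2 * q / (Real.exp 1 * α)) ^ (q / α) * Real.exp (t ^ α - L) := by
  rcases le_total t b with htb | hbt
  · rw [max_eq_right (sub_nonpos.2 htb), Real.zero_rpow hq.ne']
    positivity
  have hsub : 0 ≤ t - b := sub_nonneg.2 hbt
  have hexcess : (t - b) ^ α ≤ 2 * (t ^ α - L) := by
    have h₁ : (t - b) ^ α ≤ t ^ α := by gcongr; linarith
    have h₂ : b ^ α ≤ t ^ α := by gcongr
    linarith
  have hL : 0 ≤ t ^ α - L := by linarith [Real.rpow_nonneg hsub α]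
  calc max (t - b) 0 ^ q = ((t - b) ^ α) ^ (q / α) := by
        rw [max_eq_left hsub, ← Real.rpow_mul hsub, mul_div_cancel₀ _ hα.ne']
    _ ≤ (2 * (t ^ α - L)) ^ (q / α) := by gcongr
    _ = 2 ^ (q / α) * (t ^ α - L) ^ (q / α) := Real.mul_rpow zero_le_two hL
    _ ≤ 2 ^ (q / α) * ((q / α / Real.exp 1) ^ (q / α) * Real.exp (t ^ α - L)) := by
        gcongr
        exact rpow_le_div_exp_one_rpow_mul_exp (by positivity) hL
    _ = (2 * q / (Real.exp 1 * α)) ^ (q / α) * Real.exp (t ^ α - L) := by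
        rw [← mul_assoc, ← Real.mul_rpow zero_le_two (by positivity)]
        congr 2
        field_simp

lemma le_rpow_div_add_one_sub {α s : ℝ} (hα : 1 ≤ α) (hs : 0 ≤ s) :
    s ≤ s ^ α / α + (1 - 1 / α) := by
  have : 0 < α := by linarith
  have bernoulli : 1 + α * (s - 1) ≤ s ^ α := by
    simpa using one_add_mul_self_le_rpow_one_add (s := s - 1) (by linarith) hα
  calc s = (1 + α * (s - 1)) / α + (1 - 1 / α) := by field_simp; ring
    _ ≤ s ^ α / α + (1 - 1 / α) := by gcongr

lemma div_one_add_rpow_le {α t L : ℝ} (hα : 1 ≤ α) (ht : 0 ≤ t) (hL : 0 ≤ L) :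
    t / (1 + L ^ (1 / α)) ≤ t ^ α / (α * (1 + L)) + (1 - 1 / α) := by
  have hα₀ : 0 < α := by linarith
  have hsubadd : (1 + L) ^ (1 / α) ≤ 1 + L ^ (1 / α) := by
    simpa using Real.rpow_add_le_add_rpow zero_le_one hL (by positivity)
      ((div_le_one hα₀).2 hα)
  calc t / (1 + L ^ (1 / α)) ≤ t / (1 + L) ^ (1 / α) := by gcongr
    _ ≤ (t / (1 + L) ^ (1 / α)) ^ α / α + (1 - 1 / α) :=
        le_rpow_div_add_one_sub hα (by positivity)
    _ = t ^ α / (α * (1 + L)) + (1 - 1 / α) := by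
        rw [Real.div_rpow ht (by positivity), one_div,
          Real.rpow_inv_rpow (by positivity) hα₀.ne', div_div, mul_comm α]

lemma two_mul_rpow_log_two_div_le {α N : ℝ} (hα : 0 < α) (hN : 1 ≤ N) :
    (2 * N) ^ (Real.log 2 / (α * (1 + Real.log N))) ≤ 2 ^ (1 / α) := by
  have hlogN : 0 ≤ Real.log N := Real.log_nonneg hN
  rw [Real.rpow_def_of_pos (by positivity), Real.rpow_def_of_pos two_pos,
    Real.log_mul two_ne_zero (by positivity), Real.exp_le_exp]
  calc (Real.log 2 + Real.log N) * (Real.log 2 / (α * (1 + Real.log N)))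
      ≤ (1 + Real.log N) * (Real.log 2 / (α * (1 + Real.log N))) := by
        gcongr
        linarith [Real.log_two_lt_d9]
    _ = Real.log 2 * (1 / α) := by field_simp

lemma inv_log_two_le_three_rpow_mul {α : ℝ} (hα : 0 < α) :
    (Real.log 2)⁻¹ ≤ 3 ^ (1 / α) * Real.log 2 ^ ((1 - α) / α) := by
  have hlog : 0 < Real.log 2 := Real.log_pos one_lt_two
  calc (Real.log 2)⁻¹ ≤ (3 * Real.log 2) ^ (1 / α) * (Real.log 2)⁻¹ := by
        refine le_mul_of_one_le_left (by positivity) (Real.one_le_rpow ?_ (by positivity))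
        linarith [Real.log_two_gt_d9]
    _ = 3 ^ (1 / α) * Real.log 2 ^ ((1 - α) / α) := by
        rw [Real.mul_rpow (by norm_num) hlog.le, mul_assoc, ← Real.rpow_neg_one (Real.log 2),
          ← Real.rpow_add hlog]
        congr 2
        field_simp
        ring

lemma exp_div_le_two_rpow_div {α x K A : ℝ} (hα : 0 < α) (hx : 0 ≤ x) (hK : 0 ≤ K) (hA : 0 ≤ A) :
    Real.exp (x / (3 ^ (1 / α) * Real.log 2 ^ ((1 - α) / α) * K * A)) ≤ 2 ^ (x / (K * A)) := by
  have hlog : 0 < Real.log 2 := Real.log_pos one_lt_two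
  rw [Real.rpow_def_of_pos two_pos, Real.exp_le_exp]
  calc x / (3 ^ (1 / α) * Real.log 2 ^ ((1 - α) / α) * K * A)
      = (3 ^ (1 / α) * Real.log 2 ^ ((1 - α) / α))⁻¹ * (x / (K * A)) := by ring
    _ ≤ Real.log 2 * (x / (K * A)) := by
        gcongr
        exact inv_le_of_inv_le₀ hlog (inv_log_two_le_three_rpow_mul hα)

end RealInequalities

section Lintegral

variable {Ω : Type*} [MeasurableSpace Ω] {P : Measure Ω}

lemma lintegral_comp_norm_le_sum {ι E : Type*} [Fintype ι] [Nonempty ι]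
    [SeminormedAddCommGroup E] {X : Ω → ι → E} {g : ℝ → ℝ≥0∞}
    (hg : ∀ i, AEMeasurable (fun ω => g ‖X ω i‖) P) :
    ∫⁻ ω, g ‖X ω‖ ∂P ≤ ∑ i, ∫⁻ ω, g ‖X ω i‖ ∂P := by
  rw [← lintegral_finsetSum' _ fun i _ => hg i]
  refine lintegral_mono fun ω => ?_
  obtain ⟨i, hi⟩ := Finite.exists_max fun i => ‖X ω i‖
  have hnorm : ‖X ω‖ = ‖X ω i‖ :=
    le_antisymm ((pi_norm_le_iff_of_nonneg (norm_nonneg _)).2 hi) (norm_le_pi_norm _ _)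
  rw [hnorm]
  exact Finset.single_le_sum (f := fun i => g ‖X ω i‖) (fun _ _ => zero_le) (Finset.mem_univ i)

variable [IsProbabilityMeasure P]

lemma lintegral_rpow_le_rpow_lintegral {f : Ω → ℝ≥0∞} (hf : AEMeasurable f P) {a : ℝ}
    (ha₀ : 0 ≤ a) (ha₁ : a ≤ 1) : ∫⁻ ω, f ω ^ a ∂P ≤ (∫⁻ ω, f ω ∂P) ^ a := by
  simpa using ENNReal.lintegral_mul_norm_pow_le hf (aemeasurable_const (b := 1)) ha₀
    (sub_nonneg.2 ha₁) (add_sub_cancel a 1)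

lemma lintegral_add_const_rpow_le {f : Ω → ℝ≥0∞} (hf : AEMeasurable f P) {q : ℝ} (hq : 1 ≤ q)
    {C : ℝ≥0∞} (hC : ∫⁻ ω, f ω ^ q ∂P ≤ C ^ q) (b : ℝ≥0∞) :
    ∫⁻ ω, (f ω + b) ^ q ∂P ≤ (C + b) ^ q := by
  have hq₀ : 0 < q := by linarith
  rw [← ENNReal.rpow_inv_le_iff hq₀, ← one_div]
  calc (∫⁻ ω, (f ω + b) ^ q ∂P) ^ (1 / q)
      ≤ (∫⁻ ω, f ω ^ q ∂P) ^ (1 / q) + (∫⁻ _, b ^ q ∂P) ^ (1 / q) :=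
        ENNReal.lintegral_Lp_add_le hf aemeasurable_const hq
    _ ≤ (C ^ q) ^ (1 / q) + (b ^ q) ^ (1 / q) := by
        gcongr
        simp
    _ = C + b := by simp only [one_div, ENNReal.rpow_rpow_inv hq₀.ne']

end Lintegral

section ExpPowerMoment

variable {Ω : Type*} [MeasurableSpace Ω] {P : Measure Ω} {Y : Ω → ℝ} {α N : ℝ}

lemma lintegral_max_sub_zero_rpow_le (hα : 0 < α) (hN : 0 < N)
    (hexp : ∫⁻ ω, ENNReal.ofReal (Real.exp (Y ω ^ α)) ∂P ≤ ENNReal.ofReal (2 * N))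
    {q b : ℝ} (hq : 0 < q) (hb : 0 ≤ b) (hbN : b ^ α = 2 * Real.log N) :
    ∫⁻ ω, ENNReal.ofReal (max (Y ω - b) 0) ^ q ∂P ≤
      ENNReal.ofReal (2 * (2 * q / (Real.exp 1 * α)) ^ (q / α)) := by
  set A : ℝ := (2 * q / (Real.exp 1 * α)) ^ (q / α)
  have : 0 ≤ A := by positivity
  calc ∫⁻ ω, ENNReal.ofReal (max (Y ω - b) 0) ^ q ∂P
      ≤ ∫⁻ ω, ENNReal.ofReal (A / N) * ENNReal.ofReal (Real.exp (Y ω ^ α)) ∂P := by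
        refine lintegral_mono fun ω => ?_
        rw [ENNReal.ofReal_rpow_of_nonneg (le_max_right _ _) hq.le,
          ← ENNReal.ofReal_mul (by positivity)]
        refine ENNReal.ofReal_le_ofReal ((max_sub_zero_rpow_le hα hq hb hbN).trans_eq ?_)
        rw [Real.exp_sub, Real.exp_log hN]
        ring
    _ = ENNReal.ofReal (A / N) * ∫⁻ ω, ENNReal.ofReal (Real.exp (Y ω ^ α)) ∂P :=
        lintegral_const_mul' _ _ ENNReal.ofReal_ne_top
    _ ≤ ENNReal.ofReal (A / N) * ENNReal.ofReal (2 * N) := by gcongr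
    _ = ENNReal.ofReal (2 * A) := by
        rw [← ENNReal.ofReal_mul (by positivity)]
        congr 1
        field_simp

variable [IsProbabilityMeasure P]

lemma lintegral_rpow_le_of_lintegral_exp_rpow_le (hY : AEMeasurable Y P) (hY₀ : ∀ ω, 0 ≤ Y ω)
    (hα : 0 < α) (hN : 1 ≤ N)
    (hexp : ∫⁻ ω, ENNReal.ofReal (Real.exp (Y ω ^ α)) ∂P ≤ ENNReal.ofReal (2 * N))
    {q : ℝ} (hq : 1 ≤ q) :
    ∫⁻ ω, ENNReal.ofReal (Y ω ^ q) ∂P ≤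
      ENNReal.ofReal ((2 ^ (1 / q) * (2 * q / (Real.exp 1 * α)) ^ (1 / α)
        + (2 * Real.log N) ^ (1 / α)) ^ q) := by
  have hq₀ : 0 < q := by linarith
  have hlogN : 0 ≤ Real.log N := Real.log_nonneg hN
  set C : ℝ := 2 ^ (1 / q) * (2 * q / (Real.exp 1 * α)) ^ (1 / α)
  set b : ℝ := (2 * Real.log N) ^ (1 / α) with hb_def
  have hC : 0 ≤ C := by positivity
  have hb : 0 ≤ b := by positivity
  have hCq : C ^ q = 2 * (2 * q / (Real.exp 1 * α)) ^ (q / α) := by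
    rw [Real.mul_rpow (by positivity) (by positivity), one_div,
      Real.rpow_inv_rpow zero_le_two hq₀.ne', ← Real.rpow_mul (by positivity),
      div_mul_eq_mul_div, one_mul]
  have hbα : b ^ α = 2 * Real.log N := by
    rw [hb_def, one_div, Real.rpow_inv_rpow (by positivity) hα.ne']
  have hexcess : ∫⁻ ω, ENNReal.ofReal (max (Y ω - b) 0) ^ q ∂P ≤ ENNReal.ofReal C ^ q := by
    rw [ENNReal.ofReal_rpow_of_nonneg hC hq₀.le, hCq]
    exact lintegral_max_sub_zero_rpow_le hα (by linarith) hexp hq₀ hb hbα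
  calc ∫⁻ ω, ENNReal.ofReal (Y ω ^ q) ∂P
      ≤ ∫⁻ ω, (ENNReal.ofReal (max (Y ω - b) 0) + ENNReal.ofReal b) ^ q ∂P := by
        refine lintegral_mono fun ω => ?_
        rw [← ENNReal.ofReal_rpow_of_nonneg (hY₀ ω) hq₀.le,
          ← ENNReal.ofReal_add (le_max_right _ _) hb]
        gcongr
        linarith [le_max_left (Y ω - b) 0]
    _ ≤ (ENNReal.ofReal C + ENNReal.ofReal b) ^ q :=
        lintegral_add_const_rpow_le (by fun_prop) hq hexcess _
    _ = ENNReal.ofReal ((C + b) ^ q) := by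
        rw [← ENNReal.ofReal_add hC hb, ENNReal.ofReal_rpow_of_nonneg (by positivity) hq₀.le]

lemma lintegral_two_rpow_le_of_lintegral_exp_rpow_le (hY : AEMeasurable Y P)
    (hY₀ : ∀ ω, 0 ≤ Y ω) (hα : 1 ≤ α) (hN : 1 ≤ N)
    (hexp : ∫⁻ ω, ENNReal.ofReal (Real.exp (Y ω ^ α)) ∂P ≤ ENNReal.ofReal (2 * N)) :
    ∫⁻ ω, ENNReal.ofReal (2 ^ (Y ω / (1 + Real.log N ^ (1 / α)))) ∂P ≤ 2 := by
  have hα₀ : 0 < α := by linarith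
  have hlogN : 0 ≤ Real.log N := Real.log_nonneg hN
  have : 0 < Real.log 2 := Real.log_pos one_lt_two
  set a : ℝ := Real.log 2 / (α * (1 + Real.log N))
  have ha₀ : 0 ≤ a := by positivity
  have ha₁ : a ≤ 1 := by
    rw [div_le_one (by positivity)]
    calc Real.log 2 ≤ 1 := by linarith [Real.log_two_lt_d9]
      _ ≤ α * (1 + Real.log N) := one_le_mul_of_one_le_of_one_le hα (by linarith)
  have hpt (ω : Ω) : (2 : ℝ) ^ (Y ω / (1 + Real.log N ^ (1 / α))) ≤
      2 ^ (1 - 1 / α) * Real.exp (Y ω ^ α) ^ a := by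
    calc (2 : ℝ) ^ (Y ω / (1 + Real.log N ^ (1 / α)))
        ≤ 2 ^ (Y ω ^ α / (α * (1 + Real.log N)) + (1 - 1 / α)) :=
          Real.rpow_le_rpow_of_exponent_le one_le_two (div_one_add_rpow_le hα (hY₀ ω) hlogN)
      _ = 2 ^ (1 - 1 / α) * Real.exp (Y ω ^ α) ^ a := by
          rw [Real.rpow_add two_pos, mul_comm, Real.rpow_def_of_pos two_pos (_ / _),
            ← Real.exp_mul]
          congr 2
          ring
  calc ∫⁻ ω, ENNReal.ofReal (2 ^ (Y ω / (1 + Real.log N ^ (1 / α)))) ∂P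
      ≤ ∫⁻ ω, ENNReal.ofReal (2 ^ (1 - 1 / α)) * ENNReal.ofReal (Real.exp (Y ω ^ α)) ^ a ∂P := by
        refine lintegral_mono fun ω => ?_
        rw [ENNReal.ofReal_rpow_of_nonneg (by positivity) ha₀, ← ENNReal.ofReal_mul (by positivity)]
        exact ENNReal.ofReal_le_ofReal (hpt ω)
    _ = ENNReal.ofReal (2 ^ (1 - 1 / α)) * ∫⁻ ω, ENNReal.ofReal (Real.exp (Y ω ^ α)) ^ a ∂P :=
        lintegral_const_mul' _ _ ENNReal.ofReal_ne_top
    _ ≤ ENNReal.ofReal (2 ^ (1 - 1 / α)) * ENNReal.ofReal (2 * N) ^ a := by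
        gcongr
        refine (lintegral_rpow_le_rpow_lintegral (by fun_prop) ha₀ ha₁).trans ?_
        gcongr
    _ ≤ ENNReal.ofReal (2 ^ (1 - 1 / α) * 2 ^ (1 / α)) := by
        rw [ENNReal.ofReal_rpow_of_nonneg (by positivity) ha₀, ← ENNReal.ofReal_mul (by positivity)]
        gcongr
        exact two_mul_rpow_log_two_div_le hα₀ hN
    _ = 2 := by
        rw [← Real.rpow_add two_pos]
        simp

end ExpPowerMoment

section PsiNorm

variable {Ω : Type*} [MeasurableSpace Ω] {P : Measure Ω} {W : Ω → ℝ} {α K : ℝ}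

lemma lintegral_exp_sub_one_le_one_of_psiNorm_lt (hα : 0 ≤ α)
    (h : psiNorm α P W < ENNReal.ofReal K) :
    ∫⁻ ω, ENNReal.ofReal (Real.exp ((|W ω| / K) ^ α) - 1) ∂P ≤ 1 := by
  obtain ⟨c, ⟨hc₀, hc_top, hc⟩, hcK⟩ := sInf_lt_iff.1 h
  have hc_pos : 0 < c.toReal := ENNReal.toReal_pos hc₀ hc_top
  have hcK' : c.toReal ≤ K := (ENNReal.lt_ofReal_iff_toReal_lt hc_top).1 hcK |>.le
  refine (lintegral_mono fun ω => ?_).trans hc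
  have : 0 ≤ |W ω| / K := div_nonneg (abs_nonneg _) (hc_pos.le.trans hcK')
  gcongr

lemma psiNorm_le_ofReal_iff (hW : AEMeasurable W P) (hα : 0 ≤ α) (hK : 0 < K) :
    psiNorm α P W ≤ ENNReal.ofReal K ↔
      ∫⁻ ω, ENNReal.ofReal (Real.exp ((|W ω| / K) ^ α) - 1) ∂P ≤ 1 := by
  refine ⟨fun h => ?_, fun h => sInf_le ⟨by simpa using hK, ENNReal.ofReal_ne_top, ?_⟩⟩
  swap
  · rwa [ENNReal.toReal_ofReal hK.le]
  let f (c : ℝ) (ω : Ω) : ℝ≥0∞ := ENNReal.ofReal (Real.exp ((|W ω| / c) ^ α) - 1)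
  have hf_meas (c : ℝ) : AEMeasurable (f c) P := by
    have : AEMeasurable (fun ω => |W ω|) P := hW.abs
    fun_prop
  have hf_tendsto (ω : Ω) : Tendsto (f · ω) (𝓝[>] K) (𝓝 (f K ω)) := by
    have hdiv : Tendsto (fun c => |W ω| / c) (𝓝[>] K) (𝓝 (|W ω| / K)) :=
      (tendsto_const_nhds.div tendsto_id hK.ne').mono_left nhdsWithin_le_nhds
    exact ENNReal.tendsto_ofReal (((hdiv.rpow_const (Or.inr hα)).rexp).sub_const 1)
  have hf_le : ∀ᶠ c in 𝓝[>] K, ∫⁻ ω, f c ω ∂P ≤ 1 := by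
    filter_upwards [self_mem_nhdsWithin] with c hKc
    exact lintegral_exp_sub_one_le_one_of_psiNorm_lt hα
      (h.trans_lt ((ENNReal.ofReal_lt_ofReal_iff (hK.trans hKc)).2 hKc))
  calc ∫⁻ ω, f K ω ∂P = ∫⁻ ω, liminf (f · ω) (𝓝[>] K) ∂P := by
        simp only [(hf_tendsto _).liminf_eq]
    _ ≤ liminf (fun c => ∫⁻ ω, f c ω ∂P) (𝓝[>] K) := lintegral_liminf_le' hf_meas
    _ ≤ 1 := liminf_le_of_frequently_le' hf_le.frequently

variable [IsProbabilityMeasure P]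

lemma lintegral_exp_le_two_of_psiNorm_le (hW : AEMeasurable W P) (hα : 0 ≤ α) (hK : 0 < K)
    (h : psiNorm α P W ≤ ENNReal.ofReal K) :
    ∫⁻ ω, ENNReal.ofReal (Real.exp ((|W ω| / K) ^ α)) ∂P ≤ 2 := by
  calc ∫⁻ ω, ENNReal.ofReal (Real.exp ((|W ω| / K) ^ α)) ∂P
      = ∫⁻ ω, (ENNReal.ofReal (Real.exp ((|W ω| / K) ^ α) - 1) + 1) ∂P := by
        refine lintegral_congr fun ω => ?_
        have hone : 1 ≤ Real.exp ((|W ω| / K) ^ α) := Real.one_le_exp (by positivity)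
        rw [← ENNReal.ofReal_one, ← ENNReal.ofReal_add (sub_nonneg.2 hone) zero_le_one,
          sub_add_cancel]
    _ = ∫⁻ ω, ENNReal.ofReal (Real.exp ((|W ω| / K) ^ α) - 1) ∂P + 1 := by
        rw [lintegral_add_right _ measurable_const, lintegral_one, measure_univ]
    _ ≤ 1 + 1 := by
        gcongr
        exact (psiNorm_le_ofReal_iff hW hα hK).1 h
    _ = 2 := one_add_one_eq_two

variable {ι : Type*} [Fintype ι] [Nonempty ι] {X : Ω → ι → ℝ}

lemma lintegral_exp_norm_le_two_mul_card (hX : AEMeasurable X P) (hα : 0 ≤ α) (hK : 0 < K)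
    (hpsi : ∀ i, psiNorm α P (fun ω => X ω i) ≤ ENNReal.ofReal K) :
    ∫⁻ ω, ENNReal.ofReal (Real.exp ((‖X ω‖ / K) ^ α)) ∂P ≤
      ENNReal.ofReal (2 * Fintype.card ι) := by
  have hXi : ∀ i, AEMeasurable (fun ω => X ω i) P := aemeasurable_pi_iff.1 hX
  calc ∫⁻ ω, ENNReal.ofReal (Real.exp ((‖X ω‖ / K) ^ α)) ∂P
      ≤ ∑ i, ∫⁻ ω, ENNReal.ofReal (Real.exp ((‖X ω i‖ / K) ^ α)) ∂P :=
        lintegral_comp_norm_le_sum (g := fun x => ENNReal.ofReal (Real.exp ((x / K) ^ α)))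
          fun i => by fun_prop
    _ ≤ ∑ _i : ι, 2 := Finset.sum_le_sum fun i _ =>
        lintegral_exp_le_two_of_psiNorm_le (hXi i) hα hK (hpsi i)
    _ = ENNReal.ofReal (2 * Fintype.card ι) := by
        rw [ENNReal.ofReal_mul zero_le_two]
        simp [mul_comm]

lemma lintegral_norm_rpow_le_of_psiNorm_le_of_pos (hX : AEMeasurable X P) (hα : 0 < α)
    (hK : 0 < K) (hpsi : ∀ i, psiNorm α P (fun ω => X ω i) ≤ ENNReal.ofReal K)
    {q : ℝ} (hq : 1 ≤ q) :
    ∫⁻ ω, ENNReal.ofReal (‖X ω‖ ^ q) ∂P ≤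
      ENNReal.ofReal (K ^ q * (2 ^ (1 / q) * (2 * q / (Real.exp 1 * α)) ^ (1 / α)
        + (2 * Real.log (Fintype.card ι)) ^ (1 / α)) ^ q) := by
  have hcard : (1 : ℝ) ≤ Fintype.card ι := mod_cast Fintype.card_pos
  have hKq : 0 ≤ K ^ q := by positivity
  calc ∫⁻ ω, ENNReal.ofReal (‖X ω‖ ^ q) ∂P
      = ∫⁻ ω, ENNReal.ofReal (K ^ q) * ENNReal.ofReal ((‖X ω‖ / K) ^ q) ∂P := by
        refine lintegral_congr fun ω => ?_
        rw [← ENNReal.ofReal_mul hKq, ← Real.mul_rpow hK.le (by positivity),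
          mul_div_cancel₀ _ hK.ne']
    _ = ENNReal.ofReal (K ^ q) * ∫⁻ ω, ENNReal.ofReal ((‖X ω‖ / K) ^ q) ∂P :=
        lintegral_const_mul' _ _ ENNReal.ofReal_ne_top
    _ ≤ _ := by
        rw [ENNReal.ofReal_mul hKq]
        gcongr
        exact lintegral_rpow_le_of_lintegral_exp_rpow_le (by fun_prop) (fun ω => by positivity) hα
          hcard (lintegral_exp_norm_le_two_mul_card hX hα.le hK hpsi) hq

lemma lintegral_norm_rpow_le_of_psiNorm_le (hX : AEMeasurable X P) (hα : 0 < α)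
    (hK : 0 ≤ K) (hpsi : ∀ i, psiNorm α P (fun ω => X ω i) ≤ ENNReal.ofReal K)
    {q : ℝ} (hq : 1 ≤ q) :
    ∫⁻ ω, ENNReal.ofReal (‖X ω‖ ^ q) ∂P ≤
      ENNReal.ofReal (K ^ q * (2 ^ (1 / q) * (2 * q / (Real.exp 1 * α)) ^ (1 / α)
        + (2 * Real.log (Fintype.card ι)) ^ (1 / α)) ^ q) := by
  have hcont : Continuous fun c : ℝ => c ^ q := Real.continuous_rpow_const (by linarith)
  refine ge_of_tendsto (x := 𝓝[>] K) (ENNReal.tendsto_ofReal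
    ((hcont.tendsto K).mono_left nhdsWithin_le_nhds |>.mul_const _)) ?_
  filter_upwards [self_mem_nhdsWithin] with c hKc
  exact lintegral_norm_rpow_le_of_psiNorm_le_of_pos hX hα (hK.trans_lt hKc)
    (fun i => (hpsi i).trans (ENNReal.ofReal_le_ofReal (le_of_lt hKc))) hq

lemma lintegral_two_rpow_norm_le_of_psiNorm_le (hX : AEMeasurable X P) (hα : 1 ≤ α)
    (hK : 0 ≤ K) (hpsi : ∀ i, psiNorm α P (fun ω => X ω i) ≤ ENNReal.ofReal K) :
    ∫⁻ ω, ENNReal.ofReal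
      (2 ^ (‖X ω‖ / (K * (1 + Real.log (Fintype.card ι) ^ (1 / α))))) ∂P ≤ 2 := by
  rcases hK.eq_or_lt with rfl | hK
  · -- The exponent is a division by zero, hence `0`.
    simp
  have hcard : (1 : ℝ) ≤ Fintype.card ι := mod_cast Fintype.card_pos
  simp only [← div_div]
  exact lintegral_two_rpow_le_of_lintegral_exp_rpow_le (by fun_prop) (fun ω => by positivity) hα
    hcard (lintegral_exp_norm_le_two_mul_card hX (by linarith) hK hpsi)

end PsiNorm

theorem subWeibull_sup_moment_bounds_general
    {Ω ι : Type*} [MeasurableSpace Ω] {P : Measure Ω} [IsProbabilityMeasure P]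
    [Fintype ι] [Nonempty ι] {X : Ω → ι → ℝ} (hX : AEMeasurable X P)
    {α : ℝ} (hα : 0 < α) {K : ℝ} (hK : 0 ≤ K)
    (hpsi : ∀ i, psiNorm α P (fun ω => X ω i) ≤ ENNReal.ofReal K) :
    (∀ q : ℝ, 1 ≤ q →
      ∫⁻ ω, ENNReal.ofReal (‖X ω‖ ^ q) ∂P ≤
        ENNReal.ofReal (K ^ q *
          (2 ^ (1 / q) * (6 * q / (Real.exp 1 * α)) ^ (1 / α)
            + 2 ^ (1 / α) * Real.log (Fintype.card ι) ^ (1 / α)) ^ q))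
    ∧ (1 ≤ α →
      ∫⁻ ω, ENNReal.ofReal (Real.exp (‖X ω‖ /
          (3 ^ (1 / α) * Real.log 2 ^ ((1 - α) / α) * K
            * (1 + Real.log (Fintype.card ι) ^ (1 / α))))) ∂P ≤ 2) := by
  have hlog : 0 ≤ Real.log (Fintype.card ι) := Real.log_natCast_nonneg _
  refine ⟨fun q hq => ?_, fun hα₁ => ?_⟩
  · refine (lintegral_norm_rpow_le_of_psiNorm_le hX hα hK hpsi hq).trans ?_
    rw [Real.mul_rpow zero_le_two hlog]
    gcongr
    norm_num
  · refine (lintegral_mono fun ω => ?_).trans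
      (lintegral_two_rpow_norm_le_of_psiNorm_le hX hα₁ hK hpsi)
    exact ENNReal.ofReal_le_ofReal
      (exp_div_le_two_rpow_div hα (norm_nonneg _) hK (by positivity))

/-- **Lemma S.4.2** (maximal inequalities under `ψ_α`-Orlicz norm bounds): if
`X = (X(1), …, X(p))` satisfies `max_j ‖X(j)‖_{ψ_α} ≤ K_p` for some `α > 0`, then
(1) for all `q ≥ 1`, `E‖X‖∞^q ≤ K_p^q (2^{1/q}(6q/(eα))^{1/α} + 2^{1/α}(log p)^{1/α})^q`,
and (2) if moreover `α ≥ 1`, then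
`E exp(‖X‖∞/(3^{1/α}(log 2)^{(1−α)/α} K_p (1 + (log p)^{1/α}))) ≤ 2`. -/
theorem subWeibull_sup_moment_bounds
    {Ω : Type*} [MeasurableSpace Ω] (P : Measure Ω) [IsProbabilityMeasure P]
    (p : ℕ) (hp : 0 < p) (X : Ω → Fin p → ℝ) (hXmeas : Measurable X)
    (α : ℝ) (hα : 0 < α) (Kp : ℝ) (hKp : 0 ≤ Kp)
    (hpsi : ∀ j, psiNorm α P (fun ω => X ω j) ≤ ENNReal.ofReal Kp) :
    (∀ q : ℝ, 1 ≤ q →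
      ∫⁻ ω, ENNReal.ofReal (‖X ω‖ ^ q) ∂P ≤
        ENNReal.ofReal (Kp ^ q *
          ((2 : ℝ) ^ (1/q) * (6 * q / (Real.exp 1 * α)) ^ (1/α)
            + (2 : ℝ) ^ (1/α) * (Real.log p) ^ (1/α)) ^ q))
    ∧ (1 ≤ α →
      ∫⁻ ω, ENNReal.ofReal (Real.exp (‖X ω‖ /
          ((3 : ℝ) ^ (1/α) * (Real.log 2) ^ ((1 - α)/α) * Kp
            * (1 + (Real.log p) ^ (1/α))))) ∂P ≤ 2) := by
  have : NeZero p := ⟨hp.ne'⟩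
  simpa only [Fintype.card_fin] using
    subWeibull_sup_moment_bounds_general hXmeas.aemeasurable hα hKp hpsi
end
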